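/- Smooth approximation of a BV function preserving boundary traces: let A ⊂ ℝⁿ be a bounded open set with Lipschitz boundary and φ ∈ BV(A). Then for every δ > 0 there exists φ_δ ∈ C^∞(A) such that ∫_A |φ − φ_δ| dx < δ, ∫_A |∇φ_δ| dx ≤ |Dφ|(A) + δ, and φ = φ_δ ℋ^{n−1}-a.e. on ∂A in the sense of BV traces. -/

import Mathlib

open MeasureTheory Metric Filter Set Topology Function
open scoped ENNReal NNReal RealInnerProductSpace

noncomputable section

/-- Euclidean space `ℝⁿ`. -/
abbrev En (n : ℕ) : Type := EuclideanSpace ℝ (Fin n)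

namespace Paper

variable {n : ℕ} {F : Type*} [NormedAddCommGroup F] [NormedSpace ℝ F]

/-- The `(n-1)`-dimensional Hausdorff measure `ℋ^{n-1}` on `ℝⁿ`. -/
def Hm (n : ℕ) : Measure (En n) := μH[(n : ℝ) - 1]

/-- The `i`-th standard basis vector of `ℝⁿ`. -/
def esingle (n : ℕ) (i : Fin n) : En n := EuclideanSpace.single i (1 : ℝ)

/-- `i`-th coordinate of a point of `ℝⁿ`. -/
def coord (x : En n) (i : Fin n) : ℝ := ⟪x, esingle n i⟫

/-- Divergence of a vector field. -/
def divg (X : En n → En n) (x : En n) : ℝ :=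
  ∑ i, ⟪fderiv ℝ X x (esingle n i), esingle n i⟫

/-- Smooth scalar test functions compactly supported in `Ω`. -/
def TestFun (Ω : Set (En n)) (φ : En n → ℝ) : Prop :=
  ContDiff ℝ (⊤ : ℕ∞) φ ∧ HasCompactSupport φ ∧ tsupport φ ⊆ Ω

/-- Smooth test vector fields compactly supported in `Ω`. -/
def TestField (Ω : Set (En n)) (X : En n → En n) : Prop :=
  ContDiff ℝ (⊤ : ℕ∞) X ∧ HasCompactSupport X ∧ tsupport X ⊆ Ω

/-- Squared Frobenius norm of a linear map on Euclidean space. -/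
def frobSq (L : En n →L[ℝ] F) : ℝ := ∑ i, ‖L (esingle n i)‖ ^ 2

/-- Density ratio of a set in small balls. -/
def densRatio (A : Set (En n)) (x : En n) (r : ℝ) : ℝ≥0∞ :=
  volume (A ∩ ball x r) / volume (ball x r)

/-- Approximate limit `a` of `f` at `x`, relative to `Ω`. -/
def ApproxLimAt (Ω : Set (En n)) (f : En n → F) (x : En n) (a : F) : Prop :=
  ∀ ε > 0, Tendsto (fun r : ℝ =>
      volume ({y ∈ Ω ∩ ball x r | ε < ‖f y - a‖}) / volume (ball x r))
    (𝓝[>] 0) (𝓝 0)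

/-- One-sided approximate limit of `f` at `x` in the half space `⟪y - x, ν⟫ > 0`. -/
def ApproxLimHalf (Ω : Set (En n)) (f : En n → F) (x : En n) (ν : En n) (a : F) : Prop :=
  ∀ ε > 0, Tendsto (fun r : ℝ =>
      volume ({y ∈ Ω ∩ ball x r | 0 < ⟪y - x, ν⟫ ∧ ε < ‖f y - a‖}) / volume (ball x r))
    (𝓝[>] 0) (𝓝 0)

/-- `x` is an approximate jump point of `f` with one-sided limits `a, b` and normal `ν`. -/
def JumpTriple (Ω : Set (En n)) (f : En n → F) (x : En n) (a b : F) (ν : En n) : Prop :=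
  a ≠ b ∧ ‖ν‖ = 1 ∧ ApproxLimHalf Ω f x ν a ∧ ApproxLimHalf Ω f x (-ν) b

/-- The approximate jump set `S_f` of `f` in `Ω`. -/
def jumpSet (Ω : Set (En n)) (f : En n → F) : Set (En n) :=
  {x ∈ Ω | ∃ a b ν, JumpTriple Ω f x a b ν}

/-- Amplitude of the jump of `f` at `x` (`0` outside the jump set). -/
def jumpAmp (Ω : Set (En n)) (f : En n → F) (x : En n) : ℝ≥0∞ :=
  ⨆ (a : F) (b : F) (ν : En n) (_ : JumpTriple Ω f x a b ν), (‖a - b‖₊ : ℝ≥0∞)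

/-- Approximate differentiability of `f` at `x` with approximate gradient `L`. -/
def ApproxFDerivAt (Ω : Set (En n)) (f : En n → F) (x : En n) (L : En n →L[ℝ] F) : Prop :=
  ∀ ε > 0, Tendsto (fun r : ℝ =>
      volume ({y ∈ Ω ∩ ball x r | ε * ‖y - x‖ < ‖f y - f x - L (y - x)‖}) / volume (ball x r))
    (𝓝[>] 0) (𝓝 0)

/-- `g` is (a.e. in `Ω`) the approximate gradient of `f`. -/
def HasApproxGradOn (Ω : Set (En n)) (f : En n → F) (g : En n → (En n →L[ℝ] F)) : Prop :=
  ∀ᵐ x ∂(volume.restrict Ω), ApproxFDerivAt Ω f x (g x)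

/-- The `BV` seminorm (total variation of the distributional gradient) of a scalar function. -/
def bvSeminorm (Ω : Set (En n)) (f : En n → ℝ) : ℝ≥0∞ :=
  ⨆ X : {X : En n → En n // TestField Ω X ∧ ∀ x, ‖X x‖ ≤ 1},
    ENNReal.ofReal (∫ x in Ω, f x * divg X.1 x)

/-- The `BV` seminorm of a `ℂ ≅ ℝ²`-valued map. -/
def bvSeminormC (Ω : Set (En n)) (u : En n → ℂ) : ℝ≥0∞ :=
  ⨆ X : {X : (En n → En n) × (En n → En n) //
      TestField Ω X.1 ∧ TestField Ω X.2 ∧ ∀ x, ‖X.1 x‖ ^ 2 + ‖X.2 x‖ ^ 2 ≤ 1},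
    ENNReal.ofReal (∫ x in Ω, ((u x).re * divg X.1.1 x + (u x).im * divg X.1.2 x))

/-- Membership in `BV(Ω)`. -/
def IsBVOn (Ω : Set (En n)) (f : En n → ℝ) : Prop :=
  IntegrableOn f Ω ∧ bvSeminorm Ω f < ⊤

/-- Perimeter of `A` relative to `Ω`. -/
def perim (Ω A : Set (En n)) : ℝ≥0∞ := bvSeminorm Ω (A.indicator fun _ => (1 : ℝ))

/-- The essential (measure-theoretic) boundary of `A`, standing in for the reduced
boundary `∂*A` (they agree up to an `ℋ^{n-1}`-negligible set). -/
def essBoundary (A : Set (En n)) : Set (En n) :=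
  {x | ¬ Tendsto (fun r => densRatio A x r) (𝓝[>] 0) (𝓝 0) ∧
       ¬ Tendsto (fun r => densRatio A x r) (𝓝[>] 0) (𝓝 1)}

/-- Membership in `SBV(Ω; F)`: `f` is integrable and its distributional gradient consists
of an absolutely continuous part (given by the approximate gradient `g`) and a jump part
carried by the approximate jump set, with no Cantor part; this is expressed through the
integration-by-parts formula against smooth compactly supported vector fields. -/
def IsSBVOn (Ω : Set (En n)) (f : En n → F) : Prop :=
  IntegrableOn f Ω ∧
  ∃ (g : En n → (En n →L[ℝ] F)) (θ : En n → F) (ν : En n → En n),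
    IntegrableOn g Ω ∧
    Integrable θ ((Hm n).restrict (jumpSet Ω f)) ∧
    HasApproxGradOn Ω f g ∧
    (∀ x ∈ jumpSet Ω f, ∃ a b, JumpTriple Ω f x a b (ν x) ∧ θ x = a - b) ∧
    ∀ X : En n → En n, TestField Ω X →
      ∫ x in Ω, divg X x • f x =
        (- ∫ x in Ω, g x (X x)) - ∫ x in jumpSet Ω f, ⟪ν x, X x⟫ • θ x ∂(Hm n)

/-- Membership in `GSBV(Ω)`: every truncation is `SBV` on open sets compactly
contained in `Ω`. -/
def IsGSBVOn (Ω : Set (En n)) (f : En n → ℝ) : Prop :=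
  AEStronglyMeasurable f (volume.restrict Ω) ∧
  ∀ M : ℝ, 0 < M → ∀ U : Set (En n), IsOpen U → IsCompact (closure U) → closure U ⊆ Ω →
    IsSBVOn U fun x => max (min (f x) M) (-M)

/-- Membership in the vector-valued `GSBV(Ω; F)` (via smooth truncations). -/
def IsGSBVVecOn (Ω : Set (En n)) (f : En n → F) : Prop :=
  AEStronglyMeasurable f (volume.restrict Ω) ∧
  ∀ φ : F → ℝ, ContDiff ℝ 1 φ → HasCompactSupport (fun y => fderiv ℝ φ y) →
    ∀ U : Set (En n), IsOpen U → IsCompact (closure U) → closure U ⊆ Ω →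
      IsSBVOn U fun x => φ (f x)

/-- Membership in `GSBV^p(Ω)`. -/
def IsGSBVpOn (p : ℝ) (Ω : Set (En n)) (f : En n → ℝ) : Prop :=
  IsGSBVOn Ω f ∧ Hm n (jumpSet Ω f) < ⊤ ∧
  ∃ g : En n → (En n →L[ℝ] ℝ), HasApproxGradOn Ω f g ∧
    MemLp g (ENNReal.ofReal p) (volume.restrict Ω)

/-- Membership in `SBV^p(Ω)`. -/
def IsSBVpOn (p : ℝ) (Ω : Set (En n)) (f : En n → ℝ) : Prop :=
  IsSBVOn Ω f ∧ Hm n (jumpSet Ω f) < ⊤ ∧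
  ∃ g : En n → (En n →L[ℝ] ℝ), HasApproxGradOn Ω f g ∧
    MemLp g (ENNReal.ofReal p) (volume.restrict Ω)

/-- Membership in `SBV^p(Ω; 𝕊¹)`, for maps into `𝕊¹ ⊂ ℝ² ≅ ℂ`. -/
def IsSBVpCircleOn (p : ℝ) (Ω : Set (En n)) (u : En n → ℂ) : Prop :=
  (∀ᵐ x ∂(volume.restrict Ω), ‖u x‖ = 1) ∧
  IsSBVOn Ω u ∧ Hm n (jumpSet Ω u) < ⊤ ∧
  ∃ g : En n → (En n →L[ℝ] ℂ), HasApproxGradOn Ω u g ∧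
    MemLp g (ENNReal.ofReal p) (volume.restrict Ω)

/-- `φ` is a lifting of `u` on the set `B`, i.e. `u = e^{iφ}` a.e. on `B`. -/
def IsLiftingOn (B : Set (En n)) (u : En n → ℂ) (φ : En n → ℝ) : Prop :=
  ∀ᵐ x ∂(volume.restrict B), u x = Complex.exp (Complex.I * (φ x : ℂ))

/-- `m_p[u]`: the infimum of `ℋ^{n-1}(S_φ)` over all liftings `φ ∈ GSBV^p(Ω)` of `u`. -/
def mJump (p : ℝ) (Ω : Set (En n)) (u : En n → ℂ) : ℝ≥0∞ :=
  ⨅ (φ : En n → ℝ) (_ : IsGSBVpOn p Ω φ ∧ IsLiftingOn Ω u φ), Hm n (jumpSet Ω φ)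

/-- `g` is the weak (distributional) differential of `f` on the open set `Ω`. -/
def HasWeakDerivOn (Ω : Set (En n)) (f : En n → F) (g : En n → (En n →L[ℝ] F)) : Prop :=
  ∀ φ : En n → ℝ, TestFun Ω φ → ∀ v : En n,
    ∫ x in Ω, fderiv ℝ φ x v • f x = - ∫ x in Ω, φ x • g x v

/-- Membership in the Sobolev space `W^{1,p}(Ω; F)`. -/
def MemW1pOn (p : ℝ) (Ω : Set (En n)) (f : En n → F) : Prop :=
  ∃ g : En n → (En n →L[ℝ] F), HasWeakDerivOn Ω f g ∧
    MemLp f (ENNReal.ofReal p) (volume.restrict Ω) ∧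
    MemLp g (ENNReal.ofReal p) (volume.restrict Ω)

/-- Convergence in `L¹(Ω; F)`. -/
def L1Tendsto (Ω : Set (En n)) (fk : ℕ → En n → F) (f : En n → F) : Prop :=
  (∀ k, IntegrableOn (fk k) Ω) ∧ IntegrableOn f Ω ∧
  Tendsto (fun k => ∫ x in Ω, ‖fk k x - f x‖) atTop (𝓝 0)

/-- Weak-star convergence in `BV(Ω)` (scalar): `L¹` convergence together with a uniform
bound on the `BV` seminorms. -/
def WStarBVTendsto (Ω : Set (En n)) (fk : ℕ → En n → ℝ) (f : En n → ℝ) : Prop :=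
  L1Tendsto Ω fk f ∧ ∃ C : ℝ≥0∞, C < ⊤ ∧ ∀ k, bvSeminorm Ω (fk k) ≤ C

/-- Weak-star convergence in `BV(Ω; ℝ²)` for `ℂ`-valued maps. -/
def WStarBVTendstoC (Ω : Set (En n)) (uk : ℕ → En n → ℂ) (u : En n → ℂ) : Prop :=
  L1Tendsto Ω uk u ∧ ∃ C : ℝ≥0∞, C < ⊤ ∧ ∀ k, bvSeminormC Ω (uk k) ≤ C

/-- `Ω` has Lipschitz boundary: near every boundary point, up to a rotation, `Ω` is the
region below the graph of a Lipschitz function. -/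
def HasLipschitzBoundary (Ω : Set (En n)) : Prop :=
  ∀ x ∈ frontier Ω, ∃ r : ℝ, 0 < r ∧
    ∃ e : En n ≃ₗᵢ[ℝ] WithLp 2 (En (n - 1) × ℝ), ∃ f : En (n - 1) → ℝ, ∃ L : ℝ≥0,
      LipschitzWith L f ∧
      ∀ y ∈ ball x r,
        (y ∈ Ω ↔ f (WithLp.equiv 2 (En (n - 1) × ℝ) (e y)).1 <
          (WithLp.equiv 2 (En (n - 1) × ℝ) (e y)).2)

/-- A Caccioppoli partition of `S ⊆ Ω`: pairwise disjoint sets of finite perimeter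
covering `S` up to a Lebesgue-negligible set. -/
def CaccPartition {ι : Type*} (Ω S : Set (En n)) (Ee : ι → Set (En n)) : Prop :=
  (∀ i, Ee i ⊆ S) ∧ (∀ i, perim Ω (Ee i) < ⊤) ∧
  Pairwise (Function.onFun Disjoint Ee) ∧ volume (S \ ⋃ i, Ee i) = 0

/-- The Ambrosio–Tortorelli energy, written in terms of given gradients. -/
def atEnergy (Ω : Set (En n)) (ε : ℝ) (v : En n → ℝ)
    (gu : En n → (En n →L[ℝ] F)) (gv : En n → (En n →L[ℝ] ℝ)) : ℝ≥0∞ :=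
  ∫⁻ x in Ω, ENNReal.ofReal
    ((v x) ^ 2 * frobSq (gu x) + ε * frobSq (gv x) + (v x - 1) ^ 2 / (4 * ε))

/-- The functional `ÂT_ε^{𝕊¹}` on the domain `Â_{𝕊¹}` (the value being `∞` outside it). -/
def AThat (Ω : Set (En n)) (ε : ℝ) (u : En n → ℂ) (v : En n → ℝ) : ℝ≥0∞ :=
  ⨅ (gu : En n → (En n →L[ℝ] ℂ)) (gv : En n → (En n →L[ℝ] ℝ))
    (_ : HasWeakDerivOn Ω u gu ∧ IntegrableOn u Ω ∧ IntegrableOn gu Ω)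
    (_ : HasWeakDerivOn Ω v gv ∧ MemLp v 2 (volume.restrict Ω) ∧
          MemLp gv 2 (volume.restrict Ω))
    (_ : MemLp (fun x => v x * Real.sqrt (frobSq (gu x))) 2 (volume.restrict Ω))
    (_ : ∀ᵐ x ∂(volume.restrict Ω), 0 ≤ v x ∧ v x ≤ 1),
    atEnergy Ω ε v gu gv

/-- The functional `AT_ε^{𝕊¹}` on the domain `A_{𝕊¹}` (the value being `∞` outside it). -/
def ATcirc (Ω : Set (En n)) (ε : ℝ) (u : En n → ℂ) (v : En n → ℝ) : ℝ≥0∞ :=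
  ⨅ (gu : En n → (En n →L[ℝ] ℂ)) (gv : En n → (En n →L[ℝ] ℝ))
    (_ : HasWeakDerivOn Ω u gu ∧ MemLp u 2 (volume.restrict Ω) ∧
          MemLp gu 2 (volume.restrict Ω))
    (_ : HasWeakDerivOn Ω v gv ∧ MemLp v 2 (volume.restrict Ω) ∧
          MemLp gv 2 (volume.restrict Ω))
    (_ : ∀ᵐ x ∂(volume.restrict Ω), 0 ≤ v x ∧ v x ≤ 1),
    atEnergy Ω ε v gu gv

/-- The Mumford–Shah functional `MS_{𝕊¹}` for `𝕊¹`-valued maps. -/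
def MScirc (Ω : Set (En n)) (u : En n → ℂ) (v : En n → ℝ) : ℝ≥0∞ :=
  ⨅ (gu : En n → (En n →L[ℝ] ℂ))
    (_ : IsSBVpCircleOn 2 Ω u ∧ HasApproxGradOn Ω u gu ∧
        MemLp gu 2 (volume.restrict Ω) ∧
        (∀ᵐ x ∂(volume.restrict Ω), v x = 1)),
    (∫⁻ x in Ω, ENNReal.ofReal (frobSq (gu x))) + Hm n (jumpSet Ω u)

/-- The nonlocal functional `MS_lift`. -/
def MSlift (Ω : Set (En n)) (u : En n → ℂ) (v : En n → ℝ) : ℝ≥0∞ :=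
  ⨅ (gu : En n → (En n →L[ℝ] ℂ))
    (_ : IsSBVpCircleOn 2 Ω u ∧ HasApproxGradOn Ω u gu ∧
        MemLp gu 2 (volume.restrict Ω) ∧
        (∀ᵐ x ∂(volume.restrict Ω), v x = 1)),
    (∫⁻ x in Ω, ENNReal.ofReal (frobSq (gu x))) + mJump 2 Ω u

/-- Γ-convergence, with respect to `L¹(Ω;𝕊¹) × L¹(Ω)`, of a family of functionals
indexed by `ε → 0⁺` to a limit functional `G`. -/
def IsGammaLimitS1 (Ω : Set (En n)) (Fe : ℝ → (En n → ℂ) → (En n → ℝ) → ℝ≥0∞)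
    (G : (En n → ℂ) → (En n → ℝ) → ℝ≥0∞) : Prop :=
  (∀ (u : En n → ℂ) (v : En n → ℝ),
      (∀ᵐ x ∂(volume.restrict Ω), ‖u x‖ = 1) →
      ∀ ε : ℕ → ℝ, (∀ k, 0 < ε k) → Tendsto ε atTop (𝓝 0) →
      ∀ (uk : ℕ → En n → ℂ) (vk : ℕ → En n → ℝ),
        (∀ k, ∀ᵐ x ∂(volume.restrict Ω), ‖uk k x‖ = 1) →
        L1Tendsto Ω uk u → L1Tendsto Ω vk v →
        G u v ≤ atTop.liminf fun k => Fe (ε k) (uk k) (vk k)) ∧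
  (∀ (u : En n → ℂ) (v : En n → ℝ),
      (∀ᵐ x ∂(volume.restrict Ω), ‖u x‖ = 1) →
      IntegrableOn u Ω → IntegrableOn v Ω →
      ∀ ε : ℕ → ℝ, (∀ k, 0 < ε k) → Tendsto ε atTop (𝓝 0) →
      ∃ (uk : ℕ → En n → ℂ) (vk : ℕ → En n → ℝ),
        (∀ k, ∀ᵐ x ∂(volume.restrict Ω), ‖uk k x‖ = 1) ∧
        L1Tendsto Ω uk u ∧ L1Tendsto Ω vk v ∧
        (atTop.limsup fun k => Fe (ε k) (uk k) (vk k)) ≤ G u v)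

/-!
Approximate `φ` by `∑' i, (φ ζᵢ) * ηᵢ`, where `ζ` is a partition of unity of `A` subordinate to the
dyadic layers `{x | dist (x, Aᶜ) ≈ 2⁻ⁱ}` and the mollifiers `ηᵢ` are chosen layer by layer. As the
sum is locally finite, every error can be made summable, even in `L¹` with the weight
`dist (x, Aᶜ)⁻⁽ⁿ⁺¹⁾`, which is at least `r⁻⁽ⁿ⁺¹⁾` on a ball of radius `r` centred on the boundary:
this is what fixes the trace. For the gradient, moving the mollifiers onto a test field `X` turns it
into `∑ i, ζᵢ (X * ηᵢ)`, again a test field bounded by one, at the cost of the commutators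
`(φ ∇ζᵢ) * ηᵢ - φ ∇ζᵢ`: the terms `φ ∇ζᵢ` can be inserted because `∑ i, ∇ζᵢ = 0` in `A`.
-/

/-! ### Mollification -/

section Mollification

variable {G : Type*} [NormedAddCommGroup G] [NormedSpace ℝ G] [FiniteDimensional ℝ G]
  [MeasurableSpace G]

/-- The mollification of `f` by the bump `b`, rescaled so that its `μ`-integral is one. -/
def mollify (μ : Measure G) (b : ContDiffBump (0 : G)) (f : G → F) : G → F :=
  convolution (b.normed μ) f (ContinuousLinearMap.lsmul ℝ ℝ) μ

variable {μ : Measure G}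

theorem mollify_apply (b : ContDiffBump (0 : G)) (f : G → F) (x : G) :
    mollify μ b f x = ∫ y, b.normed μ y • f (x - y) ∂μ := rfl

theorem norm_mollify_le_mollify_norm (b : ContDiffBump (0 : G)) (f : G → F) (x : G) :
    ‖mollify μ b f x‖ ≤ mollify μ b (fun y => ‖f y‖) x := by
  simpa only [mollify_apply, norm_smul, Real.norm_of_nonneg (b.nonneg_normed _), smul_eq_mul]
    using norm_integral_le_integral_norm (μ := μ) fun y => b.normed μ y • f (x - y)

variable [BorelSpace G] [μ.IsAddHaarMeasure]

theorem mollify_apply_swap (b : ContDiffBump (0 : G)) (f : G → F) (x : G) :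
    mollify μ b f x = ∫ y, b.normed μ (x - y) • f y ∂μ :=
  convolution_lsmul_swap

theorem integrable_smul_comp_sub_left (b : ContDiffBump (0 : G)) {f : G → F}
    (hf : LocallyIntegrable f μ) (x : G) : Integrable (fun y => b.normed μ y • f (x - y)) μ :=
  b.hasCompactSupport_normed.convolutionExists_left (ContinuousLinearMap.lsmul ℝ ℝ)
    b.continuous_normed hf x

theorem integrable_comp_sub_left_smul (b : ContDiffBump (0 : G)) {f : G → F}
    (hf : LocallyIntegrable f μ) (x : G) : Integrable (fun y => b.normed μ (x - y) • f y) μ := by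
  simpa using (integrable_smul_comp_sub_left b hf x).comp_sub_left x

theorem integrable_mollify (b : ContDiffBump (0 : G)) {f : G → F} (hf : Integrable f μ) :
    Integrable (mollify μ b f) μ :=
  b.integrable_normed.integrable_convolution _ hf

theorem mollify_sub (b : ContDiffBump (0 : G)) {f g : G → F} (hf : LocallyIntegrable f μ)
    (hg : LocallyIntegrable g μ) : mollify μ b (f - g) = mollify μ b f - mollify μ b g := by
  ext x
  simp only [Pi.sub_apply, mollify_apply, smul_sub]
  exact integral_sub (integrable_smul_comp_sub_left b hf x) (integrable_smul_comp_sub_left b hg x)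

theorem clm_mollify {E : Type*} [NormedAddCommGroup E] [NormedSpace ℝ E] [CompleteSpace E]
    [CompleteSpace F] (b : ContDiffBump (0 : G)) (L : F →L[ℝ] E) {f : G → F}
    (hf : LocallyIntegrable f μ) (x : G) : L (mollify μ b f x) = mollify μ b (L ∘ f) x := by
  simp only [mollify_apply, ← L.integral_comp_comm (integrable_smul_comp_sub_left b hf x),
    map_smul, comp_apply]

theorem exists_dist_lt_of_mollify_ne_zero {b : ContDiffBump (0 : G)} {f : G → F} {x : G}
    (h : mollify μ b f x ≠ 0) : ∃ y, dist x y < b.rOut ∧ f y ≠ 0 := by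
  obtain ⟨u, hu, v, hv, rfl⟩ := support_convolution_subset _ (mem_support.2 h)
  rw [b.support_normed_eq] at hu
  exact ⟨v, by simpa [dist_eq_norm] using hu, hv⟩

theorem hasCompactSupport_mollify (b : ContDiffBump (0 : G)) {f : G → F}
    (hf : HasCompactSupport f) : HasCompactSupport (mollify μ b f) :=
  b.hasCompactSupport_normed.convolution _ hf

theorem lintegral_enorm_mollify_le (b : ContDiffBump (0 : G)) {f : G → F} (hf : Integrable f μ) :
    ∫⁻ x, ‖mollify μ b f x‖ₑ ∂μ ≤ ∫⁻ x, ‖f x‖ₑ ∂μ := by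
  rw [← ofReal_integral_norm_eq_lintegral_enorm hf,
    ← ofReal_integral_norm_eq_lintegral_enorm (integrable_mollify b hf)]
  refine ENNReal.ofReal_le_ofReal ?_
  calc ∫ x, ‖mollify μ b f x‖ ∂μ ≤ ∫ x, mollify μ b (fun y => ‖f y‖) x ∂μ :=
        integral_mono (integrable_mollify b hf).norm (integrable_mollify b hf.norm)
          (norm_mollify_le_mollify_norm b f)
    _ = ∫ x, ‖f x‖ ∂μ := by
        simp [mollify, integral_convolution _ b.integrable_normed hf.norm, b.integral_normed]

theorem contDiff_mollify (b : ContDiffBump (0 : G)) {f : G → F}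
    (hf : LocallyIntegrable f μ) : ContDiff ℝ (⊤ : ℕ∞) (mollify μ b f) :=
  b.hasCompactSupport_normed.contDiff_convolution_left _ b.contDiff_normed hf

theorem fderiv_mollify (b : ContDiffBump (0 : G)) {f : G → F} (hf : ContDiff ℝ 1 f)
    (hfc : HasCompactSupport f) : fderiv ℝ (mollify μ b f) = mollify μ b (fderiv ℝ f) := by
  ext1 x
  rw [mollify, (hfc.hasFDerivAt_convolution_right _
    b.continuous_normed.locallyIntegrable hf x).fderiv]
  rfl

theorem norm_mollify_le [CompleteSpace F] (b : ContDiffBump (0 : G)) {f : G → F} {C : ℝ}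
    (hfm : AEStronglyMeasurable f μ) (hf : ∀ x, ‖f x‖ ≤ C) (x : G) : ‖mollify μ b f x‖ ≤ C := by
  rw [← dist_zero_right]
  exact dist_convolution_le ((norm_nonneg _).trans (hf 0)) b.support_normed_eq.subset
    b.nonneg_normed b.integral_normed hfm fun y _ => by simpa using hf y

variable {ι : Type*} {l : Filter ι} {b : ι → ContDiffBump (0 : G)}

theorem tendsto_lintegral_enorm_mollify_sub_of_continuous [CompleteSpace F]
    (hb : Tendsto (fun i => (b i).rOut) l (𝓝 0)) {f : G → F} (hf : Continuous f)
    (hfc : HasCompactSupport f) :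
    Tendsto (fun i => ∫⁻ x, ‖mollify μ (b i) f x - f x‖ₑ ∂μ) l (𝓝 0) := by
  have hK : IsCompact (cthickening 1 (tsupport f)) := hfc.isCompact.cthickening
  refine ENNReal.tendsto_nhds_zero.2 fun ε hε => ?_
  obtain ⟨η, hη, hηε⟩ := ENNReal.exists_nnreal_pos_mul_lt (hK.measure_lt_top (μ := μ)).ne hε.ne'
  obtain ⟨R, hR, hfR⟩ := Metric.uniformContinuous_iff.1
    (hfc.uniformContinuous_of_continuous hf) η hη
  filter_upwards [hb.eventually_le_const hR, hb.eventually_le_const one_pos] with i hiR hi1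
  have pointwise_le (x : G) : ‖mollify μ (b i) f x - f x‖ₑ ≤
      (cthickening 1 (tsupport f)).indicator (fun _ => (η : ℝ≥0∞)) x := by
    by_cases hx : x ∈ cthickening 1 (tsupport f)
    · rw [indicator_of_mem hx, ← ofReal_norm, ← dist_eq_norm,
        ENNReal.ofReal_le_iff_le_toReal ENNReal.coe_ne_top]
      exact (b i).dist_normed_convolution_le hf.aestronglyMeasurable
        fun y hy => (hfR (lt_of_lt_of_le hy hiR)).le
    · have hfx : f x = 0 :=
        notMem_support.1 fun h => hx (self_subset_cthickening _ (subset_tsupport _ h))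
      have hmx : mollify μ (b i) f x = 0 := by
        by_contra h
        obtain ⟨y, hxy, hy⟩ := exists_dist_lt_of_mollify_ne_zero h
        exact hx (mem_cthickening_of_dist_le x y 1 _ (subset_tsupport _ hy) (hxy.le.trans hi1))
      simp [hfx, hmx]
  calc ∫⁻ x, ‖mollify μ (b i) f x - f x‖ₑ ∂μ
      ≤ ∫⁻ x, (cthickening 1 (tsupport f)).indicator (fun _ => (η : ℝ≥0∞)) x ∂μ :=
        lintegral_mono pointwise_le
    _ = η * μ (cthickening 1 (tsupport f)) := lintegral_indicator_const hK.measurableSet _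
    _ ≤ ε := hηε.le

theorem lintegral_enorm_mollify_sub_le (b : ContDiffBump (0 : G)) {f g : G → F}
    (hf : Integrable f μ) (hg : Integrable g μ) :
    ∫⁻ x, ‖mollify μ b f x - f x‖ₑ ∂μ ≤
      2 * ∫⁻ x, ‖f x - g x‖ₑ ∂μ + ∫⁻ x, ‖mollify μ b g x - g x‖ₑ ∂μ := by
  have pointwise_le (x : G) : ‖mollify μ b f x - f x‖ₑ ≤
      ‖mollify μ b (f - g) x‖ₑ + (‖f x - g x‖ₑ + ‖mollify μ b g x - g x‖ₑ) := by
    have h : mollify μ b f x - f x =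
        mollify μ b (f - g) x - (f x - g x) + (mollify μ b g x - g x) := by
      rw [mollify_sub b hf.locallyIntegrable hg.locallyIntegrable, Pi.sub_apply]
      abel
    rw [h, ← add_assoc]
    exact (enorm_add_le _ _).trans (add_le_add_left enorm_sub_le _)
  have hfg : AEMeasurable (fun x => ‖f x - g x‖ₑ) μ := (hf.sub hg).aestronglyMeasurable.enorm
  calc ∫⁻ x, ‖mollify μ b f x - f x‖ₑ ∂μ
      ≤ ∫⁻ x, (‖mollify μ b (f - g) x‖ₑ + (‖f x - g x‖ₑ + ‖mollify μ b g x - g x‖ₑ)) ∂μ :=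
        lintegral_mono pointwise_le
    _ = ∫⁻ x, ‖mollify μ b (f - g) x‖ₑ ∂μ +
          (∫⁻ x, ‖f x - g x‖ₑ ∂μ + ∫⁻ x, ‖mollify μ b g x - g x‖ₑ ∂μ) := by
        rw [lintegral_add_left' (integrable_mollify b (hf.sub hg)).aestronglyMeasurable.enorm,
          lintegral_add_left' hfg]
    _ ≤ _ := by
        rw [← add_assoc, two_mul]
        gcongr ?_ + _ + _
        exact lintegral_enorm_mollify_le b (hf.sub hg)

theorem tendsto_lintegral_enorm_mollify_sub [CompleteSpace F]
    (hb : Tendsto (fun i => (b i).rOut) l (𝓝 0)) {f : G → F} (hf : Integrable f μ) :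
    Tendsto (fun i => ∫⁻ x, ‖mollify μ (b i) f x - f x‖ₑ ∂μ) l (𝓝 0) := by
  refine ENNReal.tendsto_nhds_zero.2 fun ε hε => ?_
  have hε3 : ε / 3 ≠ 0 := by simpa using hε.ne'
  obtain ⟨g, hgc, hfg, hg, hgi⟩ := hf.exists_hasCompactSupport_lintegral_sub_le hε3
  filter_upwards [ENNReal.tendsto_nhds_zero.1
    (tendsto_lintegral_enorm_mollify_sub_of_continuous (μ := μ) hb hg hgc) (ε / 3)
    hε3.bot_lt] with i hi
  calc ∫⁻ x, ‖mollify μ (b i) f x - f x‖ₑ ∂μ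
      ≤ 2 * ∫⁻ x, ‖f x - g x‖ₑ ∂μ + ∫⁻ x, ‖mollify μ (b i) g x - g x‖ₑ ∂μ :=
        lintegral_enorm_mollify_sub_le (b i) hf hgi
    _ ≤ 2 * (ε / 3) + ε / 3 := by gcongr
    _ = ε := by rw [two_mul, ENNReal.add_thirds]

theorem exists_lintegral_enorm_mollify_sub_le {E : Type*} [NormedAddCommGroup E] [NormedSpace ℝ E]
    [CompleteSpace E] [CompleteSpace F] {f : G → F} (hf : Integrable f μ) {g : G → E}
    (hg : Integrable g μ) {r : ℝ} (hr : 0 < r) {ε : ℝ≥0∞} (hε : ε ≠ 0) :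
    ∃ b : ContDiffBump (0 : G), b.rOut ≤ r ∧ ∫⁻ x, ‖mollify μ b f x - f x‖ₑ ∂μ ≤ ε ∧
      ∫⁻ x, ‖mollify μ b g x - g x‖ₑ ∂μ ≤ ε := by
  have hpos (k : ℕ) : 0 < 1 / ((k : ℝ) + 1) := by positivity
  let b (k : ℕ) : ContDiffBump (0 : G) := ⟨_, _, half_pos (hpos k), half_lt_self (hpos k)⟩
  have hb : Tendsto (fun k => (b k).rOut) atTop (𝓝 0) := tendsto_one_div_add_atTop_nhds_zero_nat
  obtain ⟨k, hkr, hkf, hkg⟩ := ((hb.eventually_le_const hr).and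
    ((ENNReal.tendsto_nhds_zero.1 (tendsto_lintegral_enorm_mollify_sub hb hf) ε hε.bot_lt).and
      (ENNReal.tendsto_nhds_zero.1 (tendsto_lintegral_enorm_mollify_sub hb hg) ε hε.bot_lt))).exists
  exact ⟨b k, hkr, hkf, hkg⟩

end Mollification

section MollificationInner

variable {G : Type*} [NormedAddCommGroup G] [NormedSpace ℝ G] [FiniteDimensional ℝ G]
  [MeasurableSpace G] [BorelSpace G] {μ : Measure G} [μ.IsAddHaarMeasure]
  {E : Type*} [NormedAddCommGroup E] [InnerProductSpace ℝ E]

theorem integrable_prod_inner_normed_smul (b : ContDiffBump (0 : G)) {f g : G → E}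
    (hf : Integrable f μ) (hg : Continuous g) (hgc : HasCompactSupport g) :
    Integrable (fun p : G × G => ⟪b.normed μ (p.1 - p.2) • f p.2, g p.1⟫) (μ.prod μ) := by
  obtain ⟨C, hC⟩ := hgc.exists_bound_of_continuous hg
  have hbf : Integrable (fun p : G × G => b.normed μ (p.1 - p.2) • f p.2) (μ.prod μ) := by
    simpa using hf.convolution_integrand (ContinuousLinearMap.lsmul ℝ ℝ).flip (μ := μ)
      (b.integrable_normed (μ := μ))
  refine (hbf.norm.mul_const C).mono'
    (hbf.aestronglyMeasurable.inner (hg.comp continuous_fst).aestronglyMeasurable) ?_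
  refine Eventually.of_forall fun p => (norm_inner_le_norm _ _).trans ?_
  gcongr
  exact hC _

theorem integral_inner_mollify_left [CompleteSpace E] (b : ContDiffBump (0 : G)) {f g : G → E}
    (hf : Integrable f μ) (hg : Continuous g) (hgc : HasCompactSupport g) :
    ∫ x, ⟪mollify μ b f x, g x⟫ ∂μ = ∫ x, ⟪f x, mollify μ b g x⟫ ∂μ := by
  have hgi : LocallyIntegrable g μ := hg.locallyIntegrable
  have hl (x : G) : ⟪mollify μ b f x, g x⟫ = ∫ y, ⟪b.normed μ (x - y) • f y, g x⟫ ∂μ := by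
    rw [mollify_apply_swap, real_inner_comm,
      ← integral_inner (integrable_comp_sub_left_smul b hf.locallyIntegrable x)]
    simp only [real_inner_comm]
  have hr (y : G) : ⟪f y, mollify μ b g y⟫ = ∫ x, ⟪b.normed μ (x - y) • f y, g x⟫ ∂μ := by
    rw [mollify_apply_swap, ← integral_inner (integrable_comp_sub_left_smul b hgi y)]
    simp only [← neg_sub y, b.normed_neg, real_inner_smul_left, real_inner_smul_right]
  simp_rw [hl, hr]
  exact integral_integral_swap (integrable_prod_inner_normed_smul b hf hg hgc)

end MollificationInner

/-! ### Divergence -/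

section CompactSupport

theorem integrable_of_continuousOn_of_tsupport_subset {G : Type*} [TopologicalSpace G]
    [MeasurableSpace G] [OpensMeasurableSpace G] {μ : Measure G} [IsFiniteMeasureOnCompacts μ]
    {E : Type*} [NormedAddCommGroup E] {s : Set G} {f : G → E} (hs : IsOpen s)
    (hf : ContinuousOn f s) (hfc : HasCompactSupport f) (hfs : tsupport f ⊆ s) :
    Integrable f μ :=
  (continuous_of_tsupport fun _ hx =>
    hf.continuousAt (hs.mem_nhds (hfs hx))).integrable_of_hasCompactSupport hfc

variable {G : Type*} [NormedAddCommGroup G] [NormedSpace ℝ G] {f : G → F}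

theorem contDiff_of_contDiffOn_of_tsupport_subset {k : WithTop ℕ∞} {s : Set G} (hs : IsOpen s)
    (hf : ContDiffOn ℝ k f s) (hfs : tsupport f ⊆ s) : ContDiff ℝ k f :=
  contMDiff_iff_contDiff.1 <| contMDiff_of_tsupport fun _ hx =>
    (hf.contDiffAt (hs.mem_nhds (hfs hx))).contMDiffAt

theorem integral_fderiv_apply_eq_zero [FiniteDimensional ℝ G] [MeasurableSpace G] [BorelSpace G]
    {μ : Measure G} [μ.IsAddHaarMeasure] (hf : ContDiff ℝ 1 f) (hfc : HasCompactSupport f)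
    (v : G) : ∫ x, fderiv ℝ f x v ∂μ = 0 := by
  have hfi : Integrable (fun x => fderiv ℝ f x v) μ :=
    ((hf.continuous_fderiv one_ne_zero).clm_apply continuous_const).integrable_of_hasCompactSupport
      (hfc.fderiv_apply ℝ v)
  simpa using integral_smul_fderiv_eq_neg_fderiv_smul_of_integrable (μ := μ)
    (f := fun _ => (1 : ℝ)) (g := f) (v := v) (by simp) (by simpa using hfi)
    (by simpa using hf.continuous.integrable_of_hasCompactSupport hfc)
    (fun _ _ => differentiableAt_const _) (fun x _ => hf.differentiable one_ne_zero x)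

end CompactSupport

section Divergence

/-- The trace of endomorphisms of `ℝⁿ` as a continuous linear map, so that the divergence of `X`
is the trace of its derivative. -/
def traceCLM (n : ℕ) : (En n →L[ℝ] En n) →L[ℝ] ℝ :=
  ∑ i, innerSL ℝ (esingle n i) ∘L ContinuousLinearMap.apply ℝ (En n) (esingle n i)

theorem traceCLM_apply (L : En n →L[ℝ] En n) :
    traceCLM n L = ∑ i, ⟪esingle n i, L (esingle n i)⟫ := by
  simp [traceCLM, _root_.sum_apply]

theorem divg_eq_traceCLM (X : En n → En n) (x : En n) : divg X x = traceCLM n (fderiv ℝ X x) := by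
  simp only [divg, traceCLM_apply, real_inner_comm]

theorem traceCLM_smulRight (L : En n →L[ℝ] ℝ) (v : En n) : traceCLM n (L.smulRight v) = L v := by
  have hv : ∑ i, ⟪esingle n i, v⟫ • esingle n i = v := by
    simpa [esingle] using (EuclideanSpace.basisFun (Fin n) ℝ).sum_repr' v
  conv_rhs => rw [← hv]
  simp [traceCLM_apply, inner_smul_right, mul_comm]

variable {f : En n → ℝ} {X : En n → En n}

theorem divg_smul {x : En n} (hf : DifferentiableAt ℝ f x) (hX : DifferentiableAt ℝ X x) :
    divg (fun y => f y • X y) x = f x * divg X x + fderiv ℝ f x (X x) := by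
  simp only [divg_eq_traceCLM, fderiv_fun_smul hf hX, map_add, map_smul, smul_eq_mul,
    traceCLM_smulRight]

theorem divg_sum {ι : Type*} (s : Finset ι) {X : ι → En n → En n} {x : En n}
    (hX : ∀ i ∈ s, DifferentiableAt ℝ (X i) x) :
    divg (fun y => ∑ i ∈ s, X i y) x = ∑ i ∈ s, divg (X i) x := by
  simp only [divg_eq_traceCLM, fderiv_fun_sum hX, map_sum]

theorem continuous_divg (hX : ContDiff ℝ 1 X) : Continuous (divg X) := by
  simp only [funext (divg_eq_traceCLM X)]
  exact (traceCLM n).continuous.comp (hX.continuous_fderiv one_ne_zero)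

theorem support_divg_subset (X : En n → En n) : support (divg X) ⊆ tsupport X := by
  intro x hx
  by_contra h
  exact hx (by rw [divg_eq_traceCLM, fderiv_of_notMem_tsupport ℝ h, map_zero])

theorem tsupport_divg_subset (X : En n → En n) : tsupport (divg X) ⊆ tsupport X :=
  closure_minimal (support_divg_subset X) (isClosed_tsupport X)

theorem hasCompactSupport_divg (hX : HasCompactSupport X) : HasCompactSupport (divg X) :=
  hX.mono' (support_divg_subset X)

theorem integral_divg_eq_zero (hX : ContDiff ℝ 1 X) (hXc : HasCompactSupport X) :
    ∫ x, divg X x = 0 := by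
  have hX' := hX.continuous_fderiv one_ne_zero
  simp only [divg]
  rw [integral_finsetSum]
  · refine Finset.sum_eq_zero fun i _ => ?_
    have hi := integral_fderiv_apply_eq_zero (μ := volume) hX hXc (esingle n i)
    have hint : Integrable fun x => fderiv ℝ X x (esingle n i) :=
      (hX'.clm_apply continuous_const).integrable_of_hasCompactSupport (hXc.fderiv_apply ℝ _)
    simp only [real_inner_comm (esingle n i), integral_inner hint, hi, inner_zero_right]
  · exact fun i _ => ((hX'.clm_apply continuous_const).inner
      continuous_const).integrable_of_hasCompactSupport
      ((hXc.fderiv_apply ℝ _).comp_left (g := (⟪·, esingle n i⟫)) (inner_zero_left _))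

theorem divg_mollify (b : ContDiffBump (0 : En n)) (hX : ContDiff ℝ 1 X)
    (hXc : HasCompactSupport X) : divg (mollify volume b X) = mollify volume b (divg X) := by
  ext x
  rw [divg_eq_traceCLM, fderiv_mollify b hX hXc,
    clm_mollify b _ (hX.continuous_fderiv one_ne_zero).locallyIntegrable, comp_def]
  simp only [← divg_eq_traceCLM]

theorem setIntegral_mul_divg {A : Set (En n)} (hA : IsOpen A) (hf : ContDiffOn ℝ 1 f A)
    (hX : ContDiff ℝ 1 X) (hXc : HasCompactSupport X) (hXA : tsupport X ⊆ A) :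
    ∫ x in A, f x * divg X x = -∫ x in A, fderiv ℝ f x (X x) := by
  have hf' := hf.continuousOn_fderiv_of_isOpen hA le_rfl
  have hfX_tsupport : tsupport (fun x => f x • X x) ⊆ tsupport X := tsupport_smul_subset_right f X
  have hfX : ContDiff ℝ 1 fun x => f x • X x :=
    contDiff_of_contDiffOn_of_tsupport_subset hA (hf.smul hX.contDiffOn) (hfX_tsupport.trans hXA)
  have product_rule : ∀ x ∈ A,
      divg (fun y => f y • X y) x = f x * divg X x + fderiv ℝ f x (X x) := fun x hx =>
    divg_smul ((hf.differentiableOn one_ne_zero).differentiableAt (hA.mem_nhds hx))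
      (hX.differentiable one_ne_zero x)
  have hint_divg : Integrable fun x => f x * divg X x :=
    integrable_of_continuousOn_of_tsupport_subset hA
      (hf.continuousOn.mul (continuous_divg hX).continuousOn) (hasCompactSupport_divg hXc).mul_left
      ((tsupport_mul_subset_right.trans (tsupport_divg_subset X)).trans hXA)
  have hsupp : support (fun x => fderiv ℝ f x (X x)) ⊆ support X :=
    fun x hx h0 => hx (by simp [h0])
  have hint_fderiv : Integrable fun x => fderiv ℝ f x (X x) :=
    integrable_of_continuousOn_of_tsupport_subset hA (hf'.clm_apply hX.continuous.continuousOn)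
      (hXc.mono hsupp) ((closure_mono hsupp).trans hXA)
  rw [eq_neg_iff_add_eq_zero, ← integral_add hint_divg.integrableOn hint_fderiv.integrableOn,
    ← setIntegral_congr_fun hA.measurableSet product_rule,
    setIntegral_eq_integral_of_forall_compl_eq_zero,
    integral_divg_eq_zero hfX (hXc.smul_left (f := f))]
  exact fun x hx => notMem_support.1 fun h =>
    hx (hXA (hfX_tsupport (support_divg_subset _ h)))

end Divergence

/-! ### Dyadic layers of an open set -/

section Depth

variable {G : Type*} [NormedAddCommGroup G]

/-- The depth of `x` in `A`: the distance from `x` to the complement of `A`, capped by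
`(2 + ‖x‖)⁻¹`. The cap keeps the depth below `1` and finite when `A` is the whole space, and it
bounds the superlevel sets. -/
def depth (A : Set G) (x : G) : ℝ :=
  (min (infEDist x Aᶜ) (ENNReal.ofReal (2 + ‖x‖)⁻¹)).toReal

variable {A : Set G} {x : G}

theorem depth_le_inv : depth A x ≤ (2 + ‖x‖)⁻¹ :=
  (ENNReal.toReal_mono ENNReal.ofReal_ne_top (min_le_right _ _)).trans_eq
    (ENNReal.toReal_ofReal (by positivity))

theorem depth_lt_one : depth A x < 1 :=
  depth_le_inv.trans_lt (inv_lt_one_of_one_lt₀ (by linarith [norm_nonneg x]))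

theorem depth_eq_zero_of_notMem (hx : x ∉ A) : depth A x = 0 := by
  rw [depth, infEDist_zero_of_mem (mem_compl hx), zero_min, ENNReal.toReal_zero]

theorem mem_of_depth_pos (hx : 0 < depth A x) : x ∈ A :=
  not_not.1 fun h => hx.ne' (depth_eq_zero_of_notMem h)

theorem depth_pos (hA : IsOpen A) (hx : x ∈ A) : 0 < depth A x := by
  refine ENNReal.toReal_pos (lt_min ?_ (ENNReal.ofReal_pos.2 (by positivity))).ne'
    (ne_top_of_le_ne_top ENNReal.ofReal_ne_top (min_le_right _ _))
  rwa [infEDist_pos_iff_notMem_closure, hA.isClosed_compl.closure_eq, notMem_compl_iff]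

theorem inv_two_add_norm_le (x y : G) : (2 + ‖x‖)⁻¹ ≤ (2 + ‖y‖)⁻¹ + dist x y := by
  have hxy : ‖y‖ - ‖x‖ ≤ dist x y := by
    simpa only [dist_comm x y, dist_eq_norm] using norm_sub_norm_le y x
  have hden : 1 ≤ (2 + ‖x‖) * (2 + ‖y‖) := by nlinarith [norm_nonneg x, norm_nonneg y]
  have hdiff : (2 + ‖x‖)⁻¹ - (2 + ‖y‖)⁻¹ = (‖y‖ - ‖x‖) / ((2 + ‖x‖) * (2 + ‖y‖)) := by
    field_simp
    ring
  have : (‖y‖ - ‖x‖) / ((2 + ‖x‖) * (2 + ‖y‖)) ≤ dist x y :=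
    div_le_of_le_mul₀ (by positivity) dist_nonneg
      (hxy.trans (le_mul_of_one_le_right dist_nonneg hden))
  linarith

theorem depth_le_depth_add_dist (A : Set G) (x y : G) : depth A x ≤ depth A y + dist x y := by
  have hcap : ENNReal.ofReal (2 + ‖x‖)⁻¹ ≤ ENNReal.ofReal (2 + ‖y‖)⁻¹ + edist x y := by
    rw [edist_dist, ← ENNReal.ofReal_add (by positivity) dist_nonneg]
    exact ENNReal.ofReal_le_ofReal (inv_two_add_norm_le x y)
  have hmin : min (infEDist x Aᶜ) (ENNReal.ofReal (2 + ‖x‖)⁻¹) ≤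
      min (infEDist y Aᶜ) (ENNReal.ofReal (2 + ‖y‖)⁻¹) + edist x y := by
    rw [← min_add_add_right]
    exact min_le_min infEDist_le_infEDist_add_edist hcap
  have hfin : min (infEDist y Aᶜ) (ENNReal.ofReal (2 + ‖y‖)⁻¹) ≠ ⊤ :=
    ne_top_of_le_ne_top ENNReal.ofReal_ne_top (min_le_right _ _)
  calc depth A x
      ≤ (min (infEDist y Aᶜ) (ENNReal.ofReal (2 + ‖y‖)⁻¹) + edist x y).toReal :=
        ENNReal.toReal_mono (ENNReal.add_ne_top.2 ⟨hfin, edist_ne_top x y⟩) hmin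
    _ = depth A y + dist x y := by
        rw [ENNReal.toReal_add hfin (edist_ne_top x y), dist_edist, depth]

theorem continuous_depth (A : Set G) : Continuous (depth A) :=
  (LipschitzWith.of_le_add (depth_le_depth_add_dist A)).continuous

theorem depth_le_dist {x₀ : G} (hx₀ : x₀ ∉ A) : depth A x ≤ dist x x₀ := by
  simpa [depth_eq_zero_of_notMem hx₀] using depth_le_depth_add_dist A x x₀

theorem isCompact_setOf_le_depth [ProperSpace G] (A : Set G) {c : ℝ} (hc : 0 < c) :
    IsCompact {x | c ≤ depth A x} := by
  refine isCompact_of_isClosed_isBounded (isClosed_le continuous_const (continuous_depth A))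
    ((isBounded_closedBall (x := (0 : G)) (r := c⁻¹)).subset fun x hx => ?_)
  have : 2 + ‖x‖ ≤ c⁻¹ := le_inv_of_le_inv₀ hc (hx.trans depth_le_inv)
  rw [mem_closedBall_zero_iff]
  linarith

variable {E : Type*} [Zero E] {f : G → E} {c : ℝ}

theorem tsupport_subset_setOf_le_depth (hf : ∀ x, f x ≠ 0 → c ≤ depth A x) :
    tsupport f ⊆ {x | c ≤ depth A x} :=
  closure_minimal hf (isClosed_le continuous_const (continuous_depth A))

theorem tsupport_subset_of_le_depth (hc : 0 < c) (hf : ∀ x, f x ≠ 0 → c ≤ depth A x) :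
    tsupport f ⊆ A := fun _ hx =>
  mem_of_depth_pos (hc.trans_le (tsupport_subset_setOf_le_depth hf hx))

theorem hasCompactSupport_of_le_depth [ProperSpace G] (hc : 0 < c)
    (hf : ∀ x, f x ≠ 0 → c ≤ depth A x) : HasCompactSupport f :=
  (isCompact_setOf_le_depth A hc).of_isClosed_subset (isClosed_tsupport f)
    (tsupport_subset_setOf_le_depth hf)

theorem exists_half_pow_lt_depth {K : Set G} (hA : IsOpen A) (hK : IsCompact K) (hKA : K ⊆ A) :
    ∃ N : ℕ, ∀ x ∈ K, 4 * (1 / 2 : ℝ) ^ N < depth A x := by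
  obtain rfl | hne := K.eq_empty_or_nonempty
  · simp
  obtain ⟨x₀, hx₀, hmin⟩ := hK.exists_isMinOn hne (continuous_depth A).continuousOn
  obtain ⟨N, hN⟩ := exists_pow_lt_of_lt_one (div_pos (depth_pos hA (hKA hx₀)) four_pos)
    (one_half_lt_one (α := ℝ))
  exact ⟨N, fun x hx => ((lt_div_iff₀' four_pos).1 hN).trans_le (hmin hx)⟩

end Depth

section Layers

variable {G : Type*} [NormedAddCommGroup G] {A : Set G}
  {E : Type*} [NormedAddCommGroup E]

/-- The `i`-th term of the sequence `s` is supported in the layer of points of `A` whose depth is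
comparable to `2⁻ⁱ`, so that the sum of `s` is locally finite in `A`. -/
def IsLayered (A : Set G) (s : ℕ → G → E) : Prop :=
  ∀ i x, s i x ≠ 0 → depth A x ∈ Icc ((1 / 2 : ℝ) ^ (i + 2)) (4 * (1 / 2) ^ i)

namespace IsLayered

variable {s : ℕ → G → E}

theorem tsum_eq_sum_range (hs : IsLayered A s) {x : G} {N : ℕ}
    (hx : 4 * (1 / 2 : ℝ) ^ N < depth A x) : ∑' i, s i x = ∑ i ∈ Finset.range N, s i x := by
  refine tsum_eq_sum fun i hi => not_not.1 fun h => ?_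
  have hNi : (1 / 2 : ℝ) ^ i ≤ (1 / 2) ^ N :=
    pow_le_pow_of_le_one (by norm_num) (by norm_num) (by simpa using hi)
  linarith [(hs i x h).2]

theorem contDiffOn_tsum [NormedSpace ℝ G] [NormedSpace ℝ E] (hA : IsOpen A) (hs : IsLayered A s)
    {k : WithTop ℕ∞} (hsk : ∀ i, ContDiff ℝ k (s i)) :
    ContDiffOn ℝ k (fun x => ∑' i, s i x) A := by
  refine fun x hx => ContDiffAt.contDiffWithinAt ?_
  obtain ⟨N, hN⟩ := exists_half_pow_lt_depth hA isCompact_singleton (singleton_subset_iff.2 hx)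
  have heq : (fun x => ∑' i, s i x) =ᶠ[𝓝 x] fun x => ∑ i ∈ Finset.range N, s i x :=
    ((continuous_depth A).continuousAt.eventually_const_lt (hN x rfl)).mono
      fun y hy => hs.tsum_eq_sum_range hy
  exact (ContDiff.sum fun i _ => hsk i).contDiffAt.congr_of_eventuallyEq heq

end IsLayered

variable [NormedSpace ℝ G]

theorem exists_contDiff_cutoff [FiniteDimensional ℝ G] {ρ : G → ℝ} (hρ : Continuous ρ) {s t : ℝ}
    (hst : s < t) :
    ∃ θ : G → ℝ, ContDiff ℝ (⊤ : ℕ∞) θ ∧ (∀ x, θ x ∈ Icc 0 1) ∧ (∀ x, t ≤ ρ x → θ x = 1) ∧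
      ∀ x, θ x ≠ 0 → s ≤ ρ x := by
  have hdisj : Disjoint {x | ρ x ≤ s} {x | t ≤ ρ x} :=
    disjoint_left.2 fun x (hs : ρ x ≤ s) (ht : t ≤ ρ x) => (hst.trans_le (ht.trans hs)).false
  obtain ⟨θ, hθ0, hθ1, hθ⟩ := exists_contMDiffMap_zero_one_of_isClosed (n := (⊤ : ℕ∞))
    (modelWithCornersSelf ℝ G) (isClosed_le hρ continuous_const)
    (isClosed_le continuous_const hρ) hdisj
  exact ⟨θ, θ.contMDiff.contDiff, hθ, fun x hx => hθ1 hx,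
    fun x hx => le_of_not_ge fun h => hx (hθ0 h)⟩

/-- A smooth partition of unity of `A` subordinate to its dyadic layers. Only finitely many terms
do not vanish at a given point, and `sum_range_eq_one` tells how many are needed. -/
structure IsDyadicPartition (A : Set G) (ζ : ℕ → G → ℝ) : Prop where
  contDiff : ∀ i, ContDiff ℝ (⊤ : ℕ∞) (ζ i)
  nonneg : ∀ i x, 0 ≤ ζ i x
  depth_mem : ∀ i x, ζ i x ≠ 0 → depth A x ∈ Icc ((1 / 2 : ℝ) ^ (i + 1)) (2 * (1 / 2) ^ i)
  sum_range_le_one : ∀ N x, ∑ i ∈ Finset.range N, ζ i x ≤ 1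
  sum_range_eq_one : ∀ N x, 2 * (1 / 2 : ℝ) ^ N ≤ depth A x → ∑ i ∈ Finset.range N, ζ i x = 1

theorem exists_isDyadicPartition [FiniteDimensional ℝ G] (A : Set G) :
    ∃ ζ : ℕ → G → ℝ, IsDyadicPartition A ζ := by
  choose θ hθ hθmem hθ1 hθ0 using fun i : ℕ => exists_contDiff_cutoff (continuous_depth A)
    (show (1 / 2 : ℝ) ^ i < 2 * (1 / 2) ^ i by linarith [show 0 < (1 / 2 : ℝ) ^ i by positivity])
  have hθzero (x : G) : θ 0 x = 0 := not_not.1 fun h =>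
    (depth_lt_one (A := A) (x := x)).not_ge (by simpa using hθ0 0 x h)
  have hsum (N : ℕ) (x : G) : ∑ i ∈ Finset.range N, (θ (i + 1) x - θ i x) = θ N x := by
    rw [Finset.sum_range_sub (fun i => θ i x), hθzero, sub_zero]
  have hhalf (i : ℕ) : 2 * (1 / 2 : ℝ) ^ (i + 1) = (1 / 2) ^ i := by ring
  have hθsucc (i : ℕ) (x : G) (hx : θ i x ≠ 0) : θ (i + 1) x = 1 :=
    hθ1 (i + 1) x ((hhalf i).trans_le (hθ0 i x hx))
  refine ⟨fun i x => θ (i + 1) x - θ i x, fun i => (hθ (i + 1)).sub (hθ i), fun i x => ?_,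
    fun i x hx => ⟨?_, ?_⟩, fun N x => ?_, fun N x hx => ?_⟩
  · by_cases h : θ i x = 0
    · simpa [h] using (hθmem (i + 1) x).1
    · simpa [hθsucc i x h] using (hθmem i x).2
  · by_cases h : θ i x = 0
    · exact hθ0 (i + 1) x (by simpa [h] using hx)
    · exact (pow_le_pow_of_le_one (by norm_num) (by norm_num) i.le_succ).trans (hθ0 i x h)
  · refine le_of_not_gt fun h => hx ?_
    have h1 := hθ1 i x h.le
    rw [hθsucc i x (h1 ▸ one_ne_zero), h1, sub_self]
  · exact (hsum N x).trans_le (hθmem N x).2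
  · exact (hsum N x).trans (hθ1 N x hx)

namespace IsDyadicPartition

variable {ζ : ℕ → G → ℝ}

theorem hasCompactSupport [ProperSpace G] (hζ : IsDyadicPartition A ζ) (i : ℕ) :
    HasCompactSupport (ζ i) :=
  hasCompactSupport_of_le_depth (c := (1 / 2 : ℝ) ^ (i + 1)) (by positivity)
    fun x hx => (hζ.depth_mem i x hx).1

theorem sum_range_fderiv_eq_zero (hζ : IsDyadicPartition A ζ) {N : ℕ} {x : G}
    (hx : 4 * (1 / 2 : ℝ) ^ N < depth A x) : ∑ i ∈ Finset.range N, fderiv ℝ (ζ i) x = 0 := by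
  have heq : (fun x => ∑ i ∈ Finset.range N, ζ i x) =ᶠ[𝓝 x] fun _ => 1 :=
    ((continuous_depth A).continuousAt.eventually_const_lt hx).mono fun y hy =>
      hζ.sum_range_eq_one N y (by linarith [show 0 < (1 / 2 : ℝ) ^ N by positivity])
  rw [← fderiv_fun_sum fun i _ => (hζ.contDiff i).contDiffAt.differentiableAt (by simp),
    heq.fderiv_eq, fderiv_const_apply]

section Mollify

variable [MeasurableSpace G] [BorelSpace G] {μ : Measure G}

theorem integrable_mul [ProperSpace G] (hζ : IsDyadicPartition A ζ) {φ : G → ℝ}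
    (hφ : Integrable φ μ) (i : ℕ) : Integrable (fun x => φ x * ζ i x) μ :=
  hφ.locallyIntegrable.integrable_smul_right_of_hasCompactSupport (hζ.contDiff i).continuous
    (hζ.hasCompactSupport i)

theorem lintegral_enorm_sub_tsum_mul_le (hA : IsOpen A) (hζ : IsDyadicPartition A ζ)
    {s : ℕ → G → ℝ} (hs : IsLayered A s) (hsm : ∀ i, AEMeasurable (s i) (μ.restrict A))
    {φ : G → ℝ} (hφ : AEMeasurable φ (μ.restrict A)) {w : G → ℝ≥0∞}
    (hw : AEMeasurable w (μ.restrict A)) :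
    ∫⁻ x in A, ‖φ x - ∑' i, s i x‖ₑ * w x ∂μ ≤
      ∑' i, ∫⁻ x in A, ‖s i x - φ x * ζ i x‖ₑ * w x ∂μ := by
  have hpointwise : ∀ x ∈ A, ‖φ x - ∑' i, s i x‖ₑ ≤ ∑' i, ‖s i x - φ x * ζ i x‖ₑ := by
    intro x hx
    obtain ⟨N, hN⟩ := exists_half_pow_lt_depth hA isCompact_singleton (singleton_subset_iff.2 hx)
    replace hN := hN x rfl
    have hsum : φ x = ∑ i ∈ Finset.range N, φ x * ζ i x := by
      rw [← Finset.mul_sum, hζ.sum_range_eq_one N x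
        (by linarith [show 0 < (1 / 2 : ℝ) ^ N by positivity]), mul_one]
    calc ‖φ x - ∑' i, s i x‖ₑ = ‖∑ i ∈ Finset.range N, (s i x - φ x * ζ i x)‖ₑ := by
          rw [enorm_sub_rev, hs.tsum_eq_sum_range hN, Finset.sum_sub_distrib, ← hsum]
      _ ≤ ∑ i ∈ Finset.range N, ‖s i x - φ x * ζ i x‖ₑ := enorm_sum_le _ _
      _ ≤ ∑' i, ‖s i x - φ x * ζ i x‖ₑ := ENNReal.sum_le_tsum _
  have hmeas (i : ℕ) :
      AEMeasurable (fun x => ‖s i x - φ x * ζ i x‖ₑ * w x) (μ.restrict A) :=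
    ((hsm i).sub (hφ.mul (hζ.contDiff i).continuous.aemeasurable)).enorm.mul hw
  rw [← lintegral_tsum hmeas]
  refine setLIntegral_mono' hA.measurableSet fun x hx => ?_
  rw [ENNReal.tsum_mul_right]
  gcongr
  exact hpointwise x hx

variable [FiniteDimensional ℝ G] [μ.IsAddHaarMeasure]

theorem depth_mem_of_mollify_ne_zero (hζ : IsDyadicPartition A ζ) {i : ℕ}
    {b : ContDiffBump (0 : G)} (hb : b.rOut ≤ (1 / 2) ^ (i + 2)) {φ : G → ℝ} {x : G}
    (hx : mollify μ b (fun y => φ y * ζ i y) x ≠ 0) :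
    depth A x ∈ Icc ((1 / 2 : ℝ) ^ (i + 2)) (4 * (1 / 2) ^ i) := by
  obtain ⟨y, hxy, hy⟩ := exists_dist_lt_of_mollify_ne_zero hx
  obtain ⟨hy_ge, hy_le⟩ := hζ.depth_mem i y (right_ne_zero_of_mul hy)
  have hx_le := depth_le_depth_add_dist A x y
  have hy_le_x := depth_le_depth_add_dist A y x
  rw [dist_comm] at hy_le_x
  have hpos : 0 < (1 / 2 : ℝ) ^ i := by positivity
  rw [pow_succ, pow_succ] at hb
  rw [pow_succ] at hy_ge
  exact ⟨by rw [pow_succ, pow_succ]; linarith, by linarith⟩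

theorem isLayered_mollify (hζ : IsDyadicPartition A ζ) {b : ℕ → ContDiffBump (0 : G)}
    (hb : ∀ i, (b i).rOut ≤ (1 / 2) ^ (i + 2)) (φ : G → ℝ) :
    IsLayered A fun i => mollify μ (b i) fun x => φ x * ζ i x :=
  fun i _ hx => hζ.depth_mem_of_mollify_ne_zero (hb i) hx

end Mollify

end IsDyadicPartition

end Layers

/-! ### Gradients and total variation -/

section SoftSign

variable {E : Type*} [NormedAddCommGroup E] [InnerProductSpace ℝ E]

/-- The smooth regularisation `v / √(τ² + |v|²)` of the direction `v / |v|`. -/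
def softSign (τ : ℝ) (v : E) : E := (√(τ ^ 2 + ‖v‖ ^ 2))⁻¹ • v

theorem contDiff_softSign {τ : ℝ} (hτ : τ ≠ 0) : ContDiff ℝ (⊤ : ℕ∞) (softSign τ : E → E) := by
  have hpos (v : E) : 0 < τ ^ 2 + ‖v‖ ^ 2 := by positivity
  exact (((contDiff_const.add (contDiff_norm_sq ℝ)).sqrt fun v => (hpos v).ne').inv
    fun v => (Real.sqrt_pos.2 (hpos v)).ne').smul contDiff_id

theorem norm_softSign_le_one (τ : ℝ) (v : E) : ‖softSign τ v‖ ≤ 1 := by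
  rw [softSign, norm_smul, norm_inv, Real.norm_of_nonneg (Real.sqrt_nonneg _)]
  exact inv_mul_le_one_of_le₀ (Real.le_sqrt_of_sq_le (by linarith [sq_nonneg τ]))
    (Real.sqrt_nonneg _)

theorem inner_softSign (τ : ℝ) (v : E) : ⟪v, softSign τ v⟫ = (√(τ ^ 2 + ‖v‖ ^ 2))⁻¹ * ‖v‖ ^ 2 := by
  rw [softSign, real_inner_smul_right, real_inner_self_eq_norm_sq]

theorem inner_softSign_nonneg (τ : ℝ) (v : E) : 0 ≤ ⟪v, softSign τ v⟫ := by
  rw [inner_softSign]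
  positivity

theorem tendsto_inner_softSign {ι : Type*} {l : Filter ι} {τ : ι → ℝ} (hτ : Tendsto τ l (𝓝 0))
    (v : E) : Tendsto (fun i => ⟪v, softSign (τ i) v⟫) l (𝓝 ‖v‖) := by
  obtain rfl | hv := eq_or_ne v 0
  · simpa using tendsto_const_nhds
  have hsqrt : Tendsto (fun i => √(τ i ^ 2 + ‖v‖ ^ 2)) l (𝓝 ‖v‖) := by
    have hlim := ((hτ.pow 2).add_const (‖v‖ ^ 2)).sqrt
    rwa [zero_pow two_ne_zero, zero_add, Real.sqrt_sq (norm_nonneg v)] at hlim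
  have hnorm : ‖v‖⁻¹ * ‖v‖ ^ 2 = ‖v‖ := by
    field_simp [norm_ne_zero_iff.2 hv]
  have hlim := (hsqrt.inv₀ (norm_ne_zero_iff.2 hv)).mul_const (‖v‖ ^ 2)
  rw [hnorm] at hlim
  simpa only [inner_softSign] using hlim

end SoftSign

section Duality

variable {A : Set (En n)} {g : En n → ℝ}

theorem ofReal_setIntegral_mul_divg_le_bvSeminorm {X : En n → En n} (hX : TestField A X)
    (hX1 : ∀ x, ‖X x‖ ≤ 1) :
    ENNReal.ofReal (∫ x in A, g x * divg X x) ≤ bvSeminorm A g :=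
  le_iSup (fun X : {X : En n → En n // TestField A X ∧ ∀ x, ‖X x‖ ≤ 1} =>
    ENNReal.ofReal (∫ x in A, g x * divg X.1 x)) ⟨X, hX, hX1⟩

theorem contDiffOn_gradient (hA : IsOpen A) (hg : ContDiffOn ℝ (⊤ : ℕ∞) g A) :
    ContDiffOn ℝ (⊤ : ℕ∞) (gradient g) A :=
  (InnerProductSpace.toDual ℝ (En n)).symm.contDiff.comp_contDiffOn
    (hg.fderiv_of_isOpen hA (by simp))

theorem lintegral_cutoff_mul_inner_softSign_le_bvSeminorm (hA : IsOpen A)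
    (hg : ContDiffOn ℝ (⊤ : ℕ∞) g A) {θ : En n → ℝ} (hθ : ContDiff ℝ (⊤ : ℕ∞) θ)
    (hθ01 : ∀ x, θ x ∈ Icc 0 1) (hθc : HasCompactSupport θ) (hθA : tsupport θ ⊆ A) {τ : ℝ}
    (hτ : τ ≠ 0) :
    ∫⁻ x in A, ENNReal.ofReal (θ x * ⟪-gradient g x, softSign τ (-gradient g x)⟫) ≤
      bvSeminorm A g := by
  have hgrad := (contDiffOn_gradient hA hg).neg
  set X : En n → En n := fun x => θ x • softSign τ (-gradient g x) with hX_def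
  have hXA : tsupport X ⊆ A := (tsupport_smul_subset_left θ _).trans hθA
  have hX : ContDiff ℝ (⊤ : ℕ∞) X := contDiff_of_contDiffOn_of_tsupport_subset hA
    (hθ.contDiffOn.smul ((contDiff_softSign hτ).comp_contDiffOn hgrad)) hXA
  have hXc : HasCompactSupport X := hθc.smul_right
  have hX1 (x : En n) : ‖X x‖ ≤ 1 := by
    rw [hX_def, norm_smul, Real.norm_of_nonneg (hθ01 x).1]
    exact mul_le_one₀ (hθ01 x).2 (norm_nonneg _) (norm_softSign_le_one _ _)
  have hX_inner (x : En n) :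
      θ x * ⟪-gradient g x, softSign τ (-gradient g x)⟫ = -fderiv ℝ g x (X x) := by
    rw [← inner_gradient_left, hX_def, real_inner_smul_right, inner_neg_left, mul_neg]
  have hint : Integrable fun x => θ x * ⟪-gradient g x, softSign τ (-gradient g x)⟫ :=
    integrable_of_continuousOn_of_tsupport_subset hA
      (hθ.continuous.continuousOn.mul (hgrad.continuousOn.inner
        ((contDiff_softSign hτ).continuous.comp_continuousOn hgrad.continuousOn)))
      hθc.mul_right (tsupport_mul_subset_left.trans hθA)
  rw [← ofReal_integral_eq_lintegral_ofReal hint.integrableOn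
    (Eventually.of_forall fun x => mul_nonneg (hθ01 x).1 (inner_softSign_nonneg _ _))]
  simp only [hX_inner]
  rw [integral_neg, ← setIntegral_mul_divg hA (hg.of_le (by simp)) (hX.of_le (by simp)) hXc hXA]
  exact ofReal_setIntegral_mul_divg_le_bvSeminorm ⟨hX, hXc, hXA⟩ hX1

theorem lintegral_enorm_fderiv_le_bvSeminorm (hA : IsOpen A) (hg : ContDiffOn ℝ (⊤ : ℕ∞) g A) :
    ∫⁻ x in A, ‖fderiv ℝ g x‖ₑ ≤ bvSeminorm A g := by
  have hpow : Tendsto (fun N : ℕ => (1 / 2 : ℝ) ^ N) atTop (𝓝 0) :=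
    tendsto_pow_atTop_nhds_zero_of_lt_one (by norm_num) (by norm_num)
  choose θ hθ hθ01 hθ1 hθ0 using fun N : ℕ => exists_contDiff_cutoff (continuous_depth A)
    (show (1 / 2 : ℝ) ^ N < 2 * (1 / 2) ^ N by linarith [show 0 < (1 / 2 : ℝ) ^ N by positivity])
  set u : ℕ → En n → ℝ≥0∞ := fun N x =>
    ENNReal.ofReal (θ N x * ⟪-gradient g x, softSign ((1 / 2) ^ N) (-gradient g x)⟫)
  have hu_tendsto : ∀ x ∈ A, Tendsto (fun N => u N x) atTop (𝓝 ‖fderiv ℝ g x‖ₑ) := by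
    intro x hx
    have hθx : Tendsto (fun N => θ N x) atTop (𝓝 1) := by
      refine tendsto_const_nhds.congr' ?_
      filter_upwards [(hpow.const_mul 2).eventually_le_const
        (by simpa using depth_pos hA hx)] with N hN using (hθ1 N x hN).symm
    rw [← ofReal_norm, show ‖fderiv ℝ g x‖ = ‖-gradient g x‖ by simp [gradient]]
    refine ENNReal.tendsto_ofReal ?_
    simpa using hθx.mul (tendsto_inner_softSign hpow (-gradient g x))
  have hgrad := (contDiffOn_gradient hA hg).continuousOn.neg
  have hu_meas (N : ℕ) : AEMeasurable (u N) (volume.restrict A) := by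
    have hsign : Continuous (softSign ((1 / 2) ^ N) : En n → En n) :=
      (contDiff_softSign (by positivity)).continuous
    exact (((hθ N).continuous.continuousOn.mul (hgrad.inner
      (hsign.comp_continuousOn hgrad))).aemeasurable hA.measurableSet).ennreal_ofReal
  calc ∫⁻ x in A, ‖fderiv ℝ g x‖ₑ
      = ∫⁻ x in A, liminf (fun N => u N x) atTop :=
        setLIntegral_congr_fun hA.measurableSet fun x hx => (hu_tendsto x hx).liminf_eq.symm
    _ ≤ liminf (fun N => ∫⁻ x in A, u N x) atTop := lintegral_liminf_le' hu_meas
    _ ≤ bvSeminorm A g := liminf_le_of_frequently_le' (Frequently.of_forall fun N =>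
        lintegral_cutoff_mul_inner_softSign_le_bvSeminorm hA hg (hθ N) (hθ01 N)
          (hasCompactSupport_of_le_depth (by positivity) (hθ0 N))
          (tsupport_subset_of_le_depth (by positivity) (hθ0 N)) (by positivity))

end Duality

/-! ### Gluing mollified layers -/

section InnerIntegral

variable {G E : Type*} [MeasurableSpace G] {μ : Measure G} [NormedAddCommGroup E]
  [InnerProductSpace ℝ E]

theorem enorm_integral_inner_le {f X : G → E} (hX1 : ∀ x, ‖X x‖ ≤ 1) :
    ‖∫ x, ⟪f x, X x⟫ ∂μ‖ₑ ≤ ∫⁻ x, ‖f x‖ₑ ∂μ := by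
  refine (enorm_integral_le_lintegral_enorm _).trans (lintegral_mono fun x => ?_)
  rw [← ofReal_norm, ← ofReal_norm]
  exact ENNReal.ofReal_le_ofReal ((norm_inner_le_norm _ _).trans
    (mul_le_of_le_one_right (norm_nonneg _) (hX1 x)))

theorem integrable_inner_of_hasCompactSupport [TopologicalSpace G] [OpensMeasurableSpace G]
    {f X : G → E} (hf : Integrable f μ) (hX : Continuous X) (hXc : HasCompactSupport X) :
    Integrable (fun x => ⟪f x, X x⟫) μ := by
  obtain ⟨C, hC⟩ := hXc.exists_bound_of_continuous hX
  have hXm : AEStronglyMeasurable X μ :=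
    (hX.stronglyMeasurable_of_hasCompactSupport hXc).aestronglyMeasurable
  refine (hf.norm.mul_const C).mono' (hf.1.inner hXm)
    (Eventually.of_forall fun x => (norm_inner_le_norm _ _).trans ?_)
  exact mul_le_mul_of_nonneg_left (hC x) (norm_nonneg _)

end InnerIntegral

section Gluing

variable {A : Set (En n)} {φ : En n → ℝ}

theorem integrable_mul_divg (hφ : Integrable φ) {X : En n → En n} (hX : ContDiff ℝ 1 X)
    (hXc : HasCompactSupport X) : Integrable fun x => φ x * divg X x :=
  hφ.locallyIntegrable.integrable_smul_right_of_hasCompactSupport (continuous_divg hX)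
    (hasCompactSupport_divg hXc)

theorem integrable_smul_gradient (hφ : Integrable φ) {ζ : En n → ℝ} (hζ : ContDiff ℝ 1 ζ)
    (hζc : HasCompactSupport ζ) : Integrable fun x => φ x • gradient ζ x :=
  hφ.locallyIntegrable.integrable_smul_right_of_hasCompactSupport
    ((InnerProductSpace.toDual ℝ (En n)).symm.continuous.comp (hζ.continuous_fderiv one_ne_zero))
    ((hζc.fderiv ℝ).comp_left (map_zero _))

theorem integral_mollify_mul_divg (b : ContDiffBump (0 : En n)) (hφ : Integrable φ) {ζ : En n → ℝ}
    (hζ : ContDiff ℝ 1 ζ) (hζc : HasCompactSupport ζ) {X : En n → En n} (hX : ContDiff ℝ 1 X)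
    (hXc : HasCompactSupport X) :
    ∫ x, mollify volume b (fun y => φ y * ζ y) x * divg X x =
      (∫ x, φ x * divg (fun y => ζ y • mollify volume b X y) x) -
        ∫ x, ⟪mollify volume b (fun y => φ y • gradient ζ y) x, X x⟫ := by
  have hmX : ContDiff ℝ 1 (mollify volume b X) :=
    (contDiff_mollify b hX.continuous.locallyIntegrable).of_le (by simp)
  have hφζ : Integrable fun x => φ x * ζ x :=
    hφ.locallyIntegrable.integrable_smul_right_of_hasCompactSupport hζ.continuous hζc
  have hleft : ∫ x, mollify volume b (fun y => φ y * ζ y) x * divg X x =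
      ∫ x, φ x * ζ x * divg (mollify volume b X) x := by
    simpa [divg_mollify b hX hXc, mul_comm] using integral_inner_mollify_left b hφζ
      (continuous_divg hX) (hasCompactSupport_divg hXc)
  have hproduct (x : En n) : φ x * ζ x * divg (mollify volume b X) x =
      φ x * divg (fun y => ζ y • mollify volume b X y) x -
        ⟪φ x • gradient ζ x, mollify volume b X x⟫ := by
    rw [divg_smul (hζ.differentiable one_ne_zero x) (hmX.differentiable one_ne_zero x),
      real_inner_smul_left, inner_gradient_left]
    ring
  have hφgrad := integrable_smul_gradient hφ hζ hζc
  have hζmX : ContDiff ℝ 1 fun x => ζ x • mollify volume b X x := hζ.smul hmX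
  rw [hleft, integral_inner_mollify_left b hφgrad hX.continuous hXc,
    ← integral_sub (integrable_mul_divg hφ hζmX hζc.smul_right)
      (integrable_inner_of_hasCompactSupport hφgrad hmX.continuous
        (hasCompactSupport_mollify b hXc))]
  simp only [hproduct]

namespace IsDyadicPartition

variable {ζ : ℕ → En n → ℝ} {X : En n → En n}

theorem testField_sum_smul_mollify (hζ : IsDyadicPartition A ζ) (b : ℕ → ContDiffBump (0 : En n))
    (hX : Continuous X) (N : ℕ) :
    TestField A fun x => ∑ i ∈ Finset.range N, ζ i x • mollify volume (b i) X x := by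
  have hsupp : ∀ x, ∑ i ∈ Finset.range N, ζ i x • mollify volume (b i) X x ≠ 0 →
      (1 / 2 : ℝ) ^ (N + 1) ≤ depth A x := by
    intro x hx
    obtain ⟨i, hi, hix⟩ := Finset.exists_ne_zero_of_sum_ne_zero hx
    exact (pow_le_pow_of_le_one (by norm_num) (by norm_num)
      (Nat.succ_le_succ (Finset.mem_range.1 hi).le)).trans
      (hζ.depth_mem i x (left_ne_zero_of_smul hix)).1
  exact ⟨ContDiff.sum fun i _ => (hζ.contDiff i).smul (contDiff_mollify (b i) hX.locallyIntegrable),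
    hasCompactSupport_of_le_depth (by positivity) hsupp,
    tsupport_subset_of_le_depth (by positivity) hsupp⟩

theorem norm_sum_smul_mollify_le_one (hζ : IsDyadicPartition A ζ)
    (b : ℕ → ContDiffBump (0 : En n)) (hX : Continuous X) (hX1 : ∀ x, ‖X x‖ ≤ 1) (N : ℕ)
    (x : En n) : ‖∑ i ∈ Finset.range N, ζ i x • mollify volume (b i) X x‖ ≤ 1 := by
  refine (norm_sum_le_of_le _ fun i _ => ?_).trans (hζ.sum_range_le_one N x)
  rw [norm_smul, Real.norm_of_nonneg (hζ.nonneg i x)]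
  exact mul_le_of_le_one_right (hζ.nonneg i x)
    (norm_mollify_le (b i) hX.aestronglyMeasurable hX1 x)

theorem sum_integral_inner_smul_gradient_eq_zero (hζ : IsDyadicPartition A ζ) (hφ : Integrable φ)
    (hX : Continuous X) (hXc : HasCompactSupport X) {N : ℕ}
    (hN : ∀ x ∈ tsupport X, 4 * (1 / 2 : ℝ) ^ N < depth A x) :
    ∑ i ∈ Finset.range N, ∫ x, ⟪φ x • gradient (ζ i) x, X x⟫ = 0 := by
  rw [← integral_finsetSum _ fun i _ => integrable_inner_of_hasCompactSupport
    (integrable_smul_gradient hφ ((hζ.contDiff i).of_le (by simp)) (hζ.hasCompactSupport i)) hX hXc]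
  refine integral_eq_zero_of_ae (Eventually.of_forall fun x => ?_)
  simp only [real_inner_smul_left, inner_gradient_left, ← Finset.mul_sum, ← _root_.sum_apply,
    Pi.zero_apply]
  by_cases hx : x ∈ tsupport X
  · simp [hζ.sum_range_fderiv_eq_zero (hN x hx)]
  · simp [image_eq_zero_of_notMem_tsupport hx]

theorem integral_sum_mollify_mul_divg (hζ : IsDyadicPartition A ζ)
    (b : ℕ → ContDiffBump (0 : En n)) (hφ : Integrable φ) (hX : ContDiff ℝ 1 X)
    (hXc : HasCompactSupport X) {N : ℕ} (hN : ∀ x ∈ tsupport X, 4 * (1 / 2 : ℝ) ^ N < depth A x) :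
    ∫ x, (∑ i ∈ Finset.range N, mollify volume (b i) (fun y => φ y * ζ i y) x) * divg X x =
      (∫ x, φ x * divg (fun y => ∑ i ∈ Finset.range N, ζ i y • mollify volume (b i) X y) x) -
        ∑ i ∈ Finset.range N, ∫ x, ⟪mollify volume (b i) (fun y => φ y • gradient (ζ i) y) x -
          φ x • gradient (ζ i) x, X x⟫ := by
  have hζ1 (i : ℕ) : ContDiff ℝ 1 (ζ i) := (hζ.contDiff i).of_le (by simp)
  have hφgrad (i : ℕ) := integrable_smul_gradient hφ (hζ1 i) (hζ.hasCompactSupport i)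
  have hmX (i : ℕ) : ContDiff ℝ 1 fun x => ζ i x • mollify volume (b i) X x := (hζ1 i).smul
    ((contDiff_mollify (b i) hX.continuous.locallyIntegrable).of_le (by simp))
  have hφζ (i : ℕ) := integrable_mollify (b i) (hζ.integrable_mul hφ i)
  have hcommutator (i : ℕ) : ∫ x, ⟪mollify volume (b i) (fun y => φ y • gradient (ζ i) y) x -
      φ x • gradient (ζ i) x, X x⟫ =
      (∫ x, ⟪mollify volume (b i) (fun y => φ y • gradient (ζ i) y) x, X x⟫) -
        ∫ x, ⟪φ x • gradient (ζ i) x, X x⟫ := by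
    simp only [inner_sub_left]
    exact integral_sub (integrable_inner_of_hasCompactSupport (integrable_mollify (b i) (hφgrad i))
      hX.continuous hXc) (integrable_inner_of_hasCompactSupport (hφgrad i) hX.continuous hXc)
  simp only [Finset.sum_mul, divg_sum _ fun i _ => (hmX i).differentiable one_ne_zero _,
    Finset.mul_sum, hcommutator, Finset.sum_sub_distrib]
  rw [hζ.sum_integral_inner_smul_gradient_eq_zero hφ hX.continuous hXc hN, sub_zero,
    integral_finsetSum _ fun i _ => integrable_mul_divg (hφζ i) hX hXc,
    integral_finsetSum _ fun i _ => integrable_mul_divg hφ (hmX i)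
      (hζ.hasCompactSupport i).smul_right, ← Finset.sum_sub_distrib]
  exact Finset.sum_congr rfl fun i _ =>
    integral_mollify_mul_divg (b i) hφ (hζ1 i) (hζ.hasCompactSupport i) hX hXc

theorem setIntegral_tsum_mollify_mul_divg (hζ : IsDyadicPartition A ζ)
    {b : ℕ → ContDiffBump (0 : En n)} (hb : ∀ i, (b i).rOut ≤ (1 / 2) ^ (i + 2))
    (hφ : Integrable φ) (hX : TestField A X) {N : ℕ}
    (hN : ∀ x ∈ tsupport X, 4 * (1 / 2 : ℝ) ^ N < depth A x) :
    ∫ x in A, (∑' i, mollify volume (b i) (fun y => φ y * ζ i y) x) * divg X x =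
      (∫ x in A, φ x * divg (fun y => ∑ i ∈ Finset.range N,
          ζ i y • mollify volume (b i) X y) x) -
        ∑ i ∈ Finset.range N, ∫ x, ⟪mollify volume (b i) (fun y => φ y • gradient (ζ i) y) x -
          φ x • gradient (ζ i) x, X x⟫ := by
  obtain ⟨hX, hXc, hXA⟩ := hX
  have hYA := (hζ.testField_sum_smul_mollify b hX.continuous N).2.2
  have hdivg_eq_zero {Z : En n → En n} (hZ : tsupport Z ⊆ A) (x : En n) (hx : x ∉ A) :
      divg Z x = 0 := image_eq_zero_of_notMem_tsupport fun h => hx (hZ (tsupport_divg_subset Z h))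
  have hfinite (x : En n) : (∑' i, mollify volume (b i) (fun y => φ y * ζ i y) x) * divg X x =
      (∑ i ∈ Finset.range N, mollify volume (b i) (fun y => φ y * ζ i y) x) * divg X x := by
    by_cases hx : x ∈ tsupport X
    · rw [(hζ.isLayered_mollify hb φ).tsum_eq_sum_range (hN x hx)]
    · rw [image_eq_zero_of_notMem_tsupport fun h => hx (tsupport_divg_subset X h), mul_zero,
        mul_zero]
  rw [setIntegral_eq_integral_of_forall_compl_eq_zero fun x hx => by
      rw [hdivg_eq_zero hXA x hx, mul_zero],
    setIntegral_eq_integral_of_forall_compl_eq_zero fun x hx => by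
      rw [hdivg_eq_zero hYA x hx, mul_zero]]
  simp only [hfinite]
  exact hζ.integral_sum_mollify_mul_divg b hφ (hX.of_le (by simp)) hXc hN

theorem bvSeminorm_tsum_mollify_le (hA : IsOpen A) (hζ : IsDyadicPartition A ζ)
    {b : ℕ → ContDiffBump (0 : En n)} (hb : ∀ i, (b i).rOut ≤ (1 / 2) ^ (i + 2))
    (hφ : Integrable φ) :
    bvSeminorm A (fun x => ∑' i, mollify volume (b i) (fun y => φ y * ζ i y) x) ≤
      bvSeminorm A φ + ∑' i, ∫⁻ x, ‖mollify volume (b i) (fun y => φ y • gradient (ζ i) y) x -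
        φ x • gradient (ζ i) x‖ₑ := by
  refine iSup_le fun ⟨X, hX, hX1⟩ => ?_
  have hXcont := hX.1.continuous
  obtain ⟨N, hN⟩ := exists_half_pow_lt_depth hA hX.2.1.isCompact hX.2.2
  rw [hζ.setIntegral_tsum_mollify_mul_divg hb hφ hX hN, sub_eq_add_neg]
  refine ENNReal.ofReal_add_le.trans (add_le_add
    (ofReal_setIntegral_mul_divg_le_bvSeminorm (hζ.testField_sum_smul_mollify b hXcont N)
      (hζ.norm_sum_smul_mollify_le_one b hXcont hX1 N)) ?_)
  set e : ℕ → En n → En n := fun i x =>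
    mollify volume (b i) (fun y => φ y • gradient (ζ i) y) x - φ x • gradient (ζ i) x
  calc ENNReal.ofReal (-∑ i ∈ Finset.range N, ∫ x, ⟪e i x, X x⟫)
      ≤ ‖∑ i ∈ Finset.range N, ∫ x, ⟪e i x, X x⟫‖ₑ := by
        rw [← enorm_neg]
        exact Real.ofReal_le_enorm _
    _ ≤ ∑ i ∈ Finset.range N, ‖∫ x, ⟪e i x, X x⟫‖ₑ := enorm_sum_le _ _
    _ ≤ ∑ i ∈ Finset.range N, ∫⁻ x, ‖e i x‖ₑ :=
        Finset.sum_le_sum fun i _ => enorm_integral_inner_le hX1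
    _ ≤ ∑' i, ∫⁻ x, ‖e i x‖ₑ := ENNReal.sum_le_tsum _

end IsDyadicPartition

end Gluing

/-! ### Weighted smooth approximation -/

section Approximation

variable {A : Set (En n)} {φ w : En n → ℝ}

theorem bvSeminorm_congr (hA : MeasurableSet A) {f g : En n → ℝ} (hfg : EqOn f g A) :
    bvSeminorm A f = bvSeminorm A g :=
  iSup_congr fun X => congrArg ENNReal.ofReal
    (setIntegral_congr_fun hA fun x hx => congrArg (· * divg X.1 x) (hfg hx))

theorem IsDyadicPartition.exists_weighted_mollify_sub_le {ζ : ℕ → En n → ℝ}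
    (hζ : IsDyadicPartition A ζ) (hφ : Integrable φ) (hw : ContinuousOn w A) (i : ℕ) {ε : ℝ≥0∞}
    (hε : ε ≠ 0) :
    ∃ b : ContDiffBump (0 : En n), b.rOut ≤ (1 / 2) ^ (i + 2) ∧
      ∫⁻ x in A, ‖mollify volume b (fun y => φ y * ζ i y) x - φ x * ζ i x‖ₑ * ‖w x‖ₑ ≤ ε ∧
      ∫⁻ x, ‖mollify volume b (fun y => φ y • gradient (ζ i) y) x -
        φ x • gradient (ζ i) x‖ₑ ≤ ε := by
  have hlayer : IsCompact {x | (1 / 2 : ℝ) ^ (i + 2) ≤ depth A x} :=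
    isCompact_setOf_le_depth A (by positivity)
  obtain ⟨C, hC⟩ := hlayer.exists_bound_of_continuousOn
    (hw.mono fun x hx => mem_of_depth_pos (lt_of_lt_of_le (by positivity) hx))
  obtain ⟨η, hη, hηC⟩ := ENNReal.exists_nnreal_pos_mul_lt (ENNReal.ofReal_ne_top (r := C)) hε
  obtain ⟨b, hb, hbφ, hbgrad⟩ := exists_lintegral_enorm_mollify_sub_le (hζ.integrable_mul hφ i)
    (integrable_smul_gradient hφ ((hζ.contDiff i).of_le (by simp)) (hζ.hasCompactSupport i))
    (r := (1 / 2) ^ (i + 2)) (by positivity) (ε := min η ε)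
    (lt_min (ENNReal.coe_pos.2 hη) hε.bot_lt).ne'
  refine ⟨b, hb, ?_, hbgrad.trans (min_le_right _ _)⟩
  have hpointwise (x : En n) :
      ‖mollify volume b (fun y => φ y * ζ i y) x - φ x * ζ i x‖ₑ * ‖w x‖ₑ ≤
        ‖mollify volume b (fun y => φ y * ζ i y) x - φ x * ζ i x‖ₑ * ENNReal.ofReal C := by
    by_cases hx : (1 / 2 : ℝ) ^ (i + 2) ≤ depth A x
    · gcongr
      rw [← ofReal_norm]
      exact ENNReal.ofReal_le_ofReal (hC x hx)
    · have hmollify : mollify volume b (fun y => φ y * ζ i y) x = 0 :=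
        not_not.1 fun h => hx (hζ.depth_mem_of_mollify_ne_zero hb h).1
      have hζx : ζ i x = 0 := not_not.1 fun h => hx <|
        (pow_le_pow_of_le_one (by norm_num) (by norm_num) (i + 1).le_succ).trans
          (hζ.depth_mem i x h).1
      simp [hmollify, hζx]
  calc ∫⁻ x in A, ‖mollify volume b (fun y => φ y * ζ i y) x - φ x * ζ i x‖ₑ * ‖w x‖ₑ
      ≤ ∫⁻ x, ‖mollify volume b (fun y => φ y * ζ i y) x - φ x * ζ i x‖ₑ * ENNReal.ofReal C :=
        (setLIntegral_le_lintegral _ _).trans (lintegral_mono hpointwise)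
    _ ≤ η * ENNReal.ofReal C := by
        rw [lintegral_mul_const' _ _ ENNReal.ofReal_ne_top]
        gcongr
        exact hbφ.trans (min_le_left _ _)
    _ ≤ ε := hηC.le

theorem exists_contDiffOn_weighted_approximation_of_integrable (hA : IsOpen A) (hφ : Integrable φ)
    (hw : ContinuousOn w A) {ε : ℝ≥0∞} (hε : ε ≠ 0) :
    ∃ g : En n → ℝ, ContDiffOn ℝ (⊤ : ℕ∞) g A ∧ ∫⁻ x in A, ‖φ x - g x‖ₑ * ‖w x‖ₑ ≤ ε ∧
      ∫⁻ x in A, ‖fderiv ℝ g x‖ₑ ≤ bvSeminorm A φ + ε := by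
  obtain ⟨ζ, hζ⟩ := exists_isDyadicPartition A
  obtain ⟨ε', hε'_pos, hε'_sum⟩ := ENNReal.exists_pos_sum_of_countable' hε ℕ
  choose b hb hbφ hbgrad using fun i =>
    hζ.exists_weighted_mollify_sub_le hφ hw i (hε'_pos i).ne'
  set s : ℕ → En n → ℝ := fun i => mollify volume (b i) fun y => φ y * ζ i y
  have hs : IsLayered A s := hζ.isLayered_mollify hb φ
  have hs_smooth (i : ℕ) : ContDiff ℝ (⊤ : ℕ∞) (s i) :=
    contDiff_mollify (b i) (hζ.integrable_mul hφ i).locallyIntegrable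
  have hg : ContDiffOn ℝ (⊤ : ℕ∞) (fun x => ∑' i, s i x) A := hs.contDiffOn_tsum hA hs_smooth
  refine ⟨fun x => ∑' i, s i x, hg, ?_, ?_⟩
  · exact (hζ.lintegral_enorm_sub_tsum_mul_le hA hs (fun i => (hs_smooth i).continuous.aemeasurable)
      hφ.1.aemeasurable.restrict (hw.aemeasurable hA.measurableSet).enorm).trans
      ((ENNReal.tsum_le_tsum hbφ).trans hε'_sum.le)
  · exact (lintegral_enorm_fderiv_le_bvSeminorm hA hg).trans
      ((hζ.bvSeminorm_tsum_mollify_le hA hb hφ).trans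
        (add_le_add_right ((ENNReal.tsum_le_tsum hbgrad).trans hε'_sum.le) _))

theorem exists_contDiffOn_weighted_approximation (hA : IsOpen A) (hφ : IntegrableOn φ A)
    (hw : ContinuousOn w A) {ε : ℝ≥0∞} (hε : ε ≠ 0) :
    ∃ g : En n → ℝ, ContDiffOn ℝ (⊤ : ℕ∞) g A ∧ ∫⁻ x in A, ‖φ x - g x‖ₑ * ‖w x‖ₑ ≤ ε ∧
      ∫⁻ x in A, ‖fderiv ℝ g x‖ₑ ≤ bvSeminorm A φ + ε := by
  have heq : EqOn (A.indicator φ) φ A := eqOn_indicator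
  obtain ⟨g, hg, hφg, hgrad⟩ := exists_contDiffOn_weighted_approximation_of_integrable hA
    (hφ.integrable_indicator hA.measurableSet) hw hε
  refine ⟨g, hg, ?_, bvSeminorm_congr hA.measurableSet heq ▸ hgrad⟩
  rwa [setLIntegral_congr_fun hA.measurableSet fun x hx => by rw [heq hx]] at hφg

end Approximation

/-! ### Boundary behaviour -/

section Boundary

theorem ofReal_integral_norm_le_lintegral_enorm {α E : Type*} [MeasurableSpace α] {μ : Measure α}
    [NormedAddCommGroup E] {f : α → E} :
    ENNReal.ofReal (∫ x, ‖f x‖ ∂μ) ≤ ∫⁻ x, ‖f x‖ₑ ∂μ :=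
  (Real.ofReal_le_enorm _).trans ((enorm_integral_le_lintegral_enorm _).trans_eq (by simp))

variable {G : Type*} [NormedAddCommGroup G] {A : Set G}

theorem one_le_mul_enorm_inv_depth_pow (hA : IsOpen A) {x : G} (hx : x ∈ A) {r : ℝ}
    (hr : depth A x ≤ r) (k : ℕ) : 1 ≤ ENNReal.ofReal (r ^ k) * ‖(depth A x)⁻¹ ^ k‖ₑ := by
  have hdepth := depth_pos hA hx
  have hr_pos := hdepth.trans_le hr
  rw [Real.enorm_of_nonneg (by positivity), ← ENNReal.ofReal_mul (by positivity),
    ENNReal.one_le_ofReal, ← mul_pow, ← div_eq_mul_inv]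
  exact one_le_pow₀ ((one_le_div hdepth).2 hr)

variable [MeasurableSpace G] [BorelSpace G] {μ : Measure G} {E : Type*} [NormedAddCommGroup E]
  {f : G → E}

theorem setLIntegral_inter_enorm_le_mul (hA : IsOpen A) {B : Set G} (hB : MeasurableSet B) {r : ℝ}
    (hr : ∀ x ∈ A ∩ B, depth A x ≤ r) (k : ℕ) :
    ∫⁻ x in A ∩ B, ‖f x‖ₑ ∂μ ≤
      ENNReal.ofReal (r ^ k) * ∫⁻ x in A, ‖f x‖ₑ * ‖(depth A x)⁻¹ ^ k‖ₑ ∂μ := by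
  calc ∫⁻ x in A ∩ B, ‖f x‖ₑ ∂μ
      ≤ ∫⁻ x in A ∩ B, ENNReal.ofReal (r ^ k) * (‖f x‖ₑ * ‖(depth A x)⁻¹ ^ k‖ₑ) ∂μ := by
        refine setLIntegral_mono' (hA.measurableSet.inter hB) fun x hx => ?_
        rw [mul_left_comm]
        exact le_mul_of_one_le_right' (one_le_mul_enorm_inv_depth_pow hA hx.1 (hr x hx) k)
    _ ≤ ENNReal.ofReal (r ^ k) * ∫⁻ x in A, ‖f x‖ₑ * ‖(depth A x)⁻¹ ^ k‖ₑ ∂μ := by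
        rw [lintegral_const_mul' _ _ ENNReal.ofReal_ne_top]
        gcongr
        exact inter_subset_left

theorem tendsto_setIntegral_norm_inter_ball_div_pow (hA : IsOpen A) {x₀ : G} (hx₀ : x₀ ∉ A)
    {k : ℕ} (hf : ∫⁻ x in A, ‖f x‖ₑ * ‖(depth A x)⁻¹ ^ (k + 1)‖ₑ ∂μ ≠ ⊤) :
    Tendsto (fun r : ℝ => (∫ x in A ∩ ball x₀ r, ‖f x‖ ∂μ) / r ^ k) (𝓝[>] 0) (𝓝 0) := by
  set D := ∫⁻ x in A, ‖f x‖ₑ * ‖(depth A x)⁻¹ ^ (k + 1)‖ₑ ∂μ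
  have hbound (r : ℝ) (hr : 0 < r) :
      (∫ x in A ∩ ball x₀ r, ‖f x‖ ∂μ) / r ^ k ≤ r * D.toReal := by
    have hball :
        ENNReal.ofReal (∫ x in A ∩ ball x₀ r, ‖f x‖ ∂μ) ≤ ENNReal.ofReal (r ^ (k + 1)) * D :=
      ofReal_integral_norm_le_lintegral_enorm.trans <|
        setLIntegral_inter_enorm_le_mul hA measurableSet_ball
          (fun x hx => (depth_le_dist hx₀).trans (mem_ball.1 hx.2).le) (k + 1)
    rw [ENNReal.ofReal_le_iff_le_toReal (ENNReal.mul_ne_top ENNReal.ofReal_ne_top hf),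
      ENNReal.toReal_mul, ENNReal.toReal_ofReal (by positivity)] at hball
    rw [div_le_iff₀ (by positivity)]
    exact hball.trans_eq (by ring)
  have hlim : Tendsto (fun r : ℝ => r * D.toReal) (𝓝[>] 0) (𝓝 0) :=
    (Continuous.tendsto' (by fun_prop) 0 0 (by simp)).mono_left nhdsWithin_le_nhds
  refine squeeze_zero' ?_ ?_ hlim <;> filter_upwards [self_mem_nhdsWithin] with r (hr : 0 < r)
  · exact div_nonneg (integral_nonneg fun x => norm_nonneg _) (by positivity)
  · exact hbound r hr

end Boundary

theorem smooth_approximation_BV_trace_general {A : Set (En n)} (hA : IsOpen A) {φ : En n → ℝ}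
    (hφ : IsBVOn A φ) {δ : ℝ} (hδ : 0 < δ) :
    ∃ φd : En n → ℝ, ContDiffOn ℝ (⊤ : ℕ∞) φd A ∧
      IntegrableOn (fun x => φ x - φd x) A ∧ (∫ x in A, |φ x - φd x|) < δ ∧
      IntegrableOn (fderiv ℝ φd) A ∧
      ENNReal.ofReal (∫ x in A, ‖fderiv ℝ φd x‖) ≤ bvSeminorm A φ + ENNReal.ofReal δ ∧
      ∀ x₀ ∈ frontier A,
        Tendsto (fun r : ℝ => (∫ y in A ∩ ball x₀ r, |φ y - φd y|) / r ^ n) (𝓝[>] 0) (𝓝 0) := by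
  have hweight : ContinuousOn (fun x => (depth A x)⁻¹ ^ (n + 1)) A :=
    ((continuous_depth A).continuousOn.inv₀ fun x hx => (depth_pos hA hx).ne').pow (n + 1)
  obtain ⟨g, hg, hφg, hgrad⟩ := exists_contDiffOn_weighted_approximation hA hφ.1 hweight
    (ENNReal.ofReal_pos.2 (half_pos hδ)).ne'
  have hL1 : ∫⁻ x in A, ‖φ x - g x‖ₑ ≤ ENNReal.ofReal (δ / 2) := by
    have hle := setLIntegral_inter_enorm_le_mul (μ := volume) (f := fun x => φ x - g x) hA
      MeasurableSet.univ (fun x _ => depth_lt_one.le) (n + 1)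
    rw [inter_univ, one_pow, ENNReal.ofReal_one, one_mul] at hle
    exact hle.trans hφg
  have hL1_lt : ENNReal.ofReal (∫ x in A, |φ x - g x|) < ENNReal.ofReal δ :=
    (ofReal_integral_norm_le_lintegral_enorm.trans hL1).trans_lt
      ((ENNReal.ofReal_lt_ofReal_iff hδ).2 (half_lt_self hδ))
  have hg_meas : AEStronglyMeasurable g (volume.restrict A) :=
    hg.continuousOn.aestronglyMeasurable hA.measurableSet
  have hfderiv_meas : AEStronglyMeasurable (fderiv ℝ g) (volume.restrict A) :=
    (hg.continuousOn_fderiv_of_isOpen hA (by simp)).aestronglyMeasurable hA.measurableSet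
  refine ⟨g, hg, ⟨hφ.1.1.sub hg_meas, hL1.trans_lt ENNReal.ofReal_lt_top⟩,
    (ENNReal.ofReal_lt_ofReal_iff hδ).1 hL1_lt,
    ⟨hfderiv_meas, hgrad.trans_lt (ENNReal.add_lt_top.2 ⟨hφ.2, ENNReal.ofReal_lt_top⟩)⟩,
    (ofReal_integral_norm_le_lintegral_enorm.trans hgrad).trans ?_, fun x₀ hx₀ =>
    tendsto_setIntegral_norm_inter_ball_div_pow hA (hA.frontier_eq ▸ hx₀).2
      (ne_top_of_le_ne_top ENNReal.ofReal_ne_top hφg)⟩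
  gcongr
  exact half_le_self hδ.le

/-- **Smooth approximation of a `BV` function preserving boundary traces**
(Remark 2.1): for `A ⊂ ℝⁿ` bounded open with Lipschitz boundary, `φ ∈ BV(A)` and
`δ > 0`, there is `φ_δ ∈ C^∞(A)` with `∫_A |φ - φ_δ| < δ`,
`∫_A |∇φ_δ| ≤ |Dφ|(A) + δ`, and `φ = φ_δ` `ℋ^{n-1}`-a.e. on `∂A` in the sense of `BV`
traces (the averaged difference over `A ∩ B_r(x₀)` is `o(rⁿ)` for `ℋ^{n-1}`-a.e.
`x₀ ∈ ∂A`). -/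
theorem smooth_approximation_BV_trace {n : ℕ} (A : Set (En n)) (hA : IsOpen A)
    (hAb : Bornology.IsBounded A) (hAl : HasLipschitzBoundary A)
    (φ : En n → ℝ) (hφ : IsBVOn A φ) (δ : ℝ) (hδ : 0 < δ) :
    ∃ φd : En n → ℝ, ContDiffOn ℝ (⊤ : ℕ∞) φd A ∧
      (∫ x in A, |φ x - φd x|) < δ ∧
      ENNReal.ofReal (∫ x in A, ‖fderiv ℝ φd x‖) ≤ bvSeminorm A φ + ENNReal.ofReal δ ∧
      (∀ᵐ x₀ ∂((Hm n).restrict (frontier A)),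
        Tendsto (fun r : ℝ => (∫ y in A ∩ ball x₀ r, |φ y - φd y|) / r ^ n)
          (𝓝[>] 0) (𝓝 0)) := by
  obtain ⟨φd, hφd, -, hL1, -, hgrad, htrace⟩ := smooth_approximation_BV_trace_general hA hφ hδ
  exact ⟨φd, hφd, hL1, hgrad, ae_restrict_of_forall_mem isClosed_frontier.measurableSet htrace⟩

end Paper
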